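/- There exists a constant ε > 0 such that for every large enough integer n the following holds. Let T be a tree on n vertices, let L be the set of leaves of T, and let v ∈ V(T) \ (L ∪ N_T(L)) be a vertex such that d_T(v) ≤ n/3 and the tree obtained from T by deleting v has maximum degree at most ε·√n. Let p be any vertex of K_n. Then, in the unbiased Waiter-Client game on the edge set of K_n, Waiter has a strategy to force Client to claim a copy of T within n rounds such that (a) in Client's copy of T, the vertex p of K_n represents the vertex v of T, and (b) in each round Waiter offers either exactly two edges incident to p or no edge incident to p. -/

import Mathlib

open Finset

/-- `WaiterWinsOffers board b allowed win t Cl W` : as in the usual `b`-biased Waiter-Client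
game on the board `board` (each round Waiter offers `b+1` previously unclaimed elements — or all
remaining ones, if fewer — of which Client claims one and the rest go to Waiter), Waiter can
force, using only offers satisfying the constraint `allowed`, that within the next `t` rounds a
position is reached where `win` holds of (Client's elements, Waiter's elements). -/
def WaiterWinsOffers {X : Type*} [DecidableEq X] (board : Finset X) (b : ℕ)
    (allowed : Finset X → Prop) (win : Finset X → Finset X → Prop) :
    ℕ → Finset X → Finset X → Prop
  | 0, Cl, W => win Cl W
  | (t+1), Cl, W => win Cl W ∨
      ∃ O : Finset X, O.Nonempty ∧ allowed O ∧ O ⊆ board \ (Cl ∪ W) ∧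
        O.card = min (b + 1) ((board \ (Cl ∪ W)).card) ∧
        ∀ x ∈ O, WaiterWinsOffers board b allowed win t (insert x Cl) (W ∪ O.erase x)

/-- The edge set of the complete graph on `Fin n`. -/
def Kedges (n : ℕ) : Finset (Sym2 (Fin n)) :=
  Finset.univ.filter (fun e => ¬ e.IsDiag)

/-!
Waiter embeds `T` from the root `v` outwards. For each edge of `T` from an embedded to an
unembedded vertex he offers two edges from the image of the former to two unused vertices of equal
degree in his own graph, so that the potential `∑ 2 ^ deg` over the unused vertices does not
increase and these degrees stay at most `log₂ n`. The neighbours of `v` come first, because `v`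
may have large degree.

Every round must embed a vertex, so the last few rounds need some freedom in the choice of the
copy. Since `T - v` has small maximum degree, `T` contains a long bare path or many leaves with
distinct neighbours. A path reserved for the end has two places at which the last unused vertex
can be inserted, the path being rerouted around it. Reserved leaves reduce the end to a matching
game down to a last leaf, which is placed by swapping it with another one.
-/

open Function

section Game

theorem WaiterWinsOffers.of_win {X : Type*} [DecidableEq X] {board : Finset X} {b : ℕ}
    {allowed : Finset X → Prop} {win : Finset X → Finset X → Prop} {t : ℕ} {C W : Finset X}
    (h : win C W) : WaiterWinsOffers board b allowed win t C W := by
  cases t with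
  | zero => exact h
  | succ t => exact Or.inl h

theorem WaiterWinsOffers.mono {X : Type*} [DecidableEq X] {board : Finset X} {b : ℕ}
    {allowed : Finset X → Prop} {win win' : Finset X → Finset X → Prop}
    (hwin : ∀ C W, win C W → win' C W) {t : ℕ} {C W : Finset X}
    (h : WaiterWinsOffers board b allowed win t C W) :
    WaiterWinsOffers board b allowed win' t C W := by
  induction t generalizing C W with
  | zero => exact hwin _ _ h
  | succ t ih =>
    rcases h with h | ⟨O, hne, hO, hsub, hcard, hnext⟩
    · exact .of_win (hwin _ _ h)
    · exact Or.inr ⟨O, hne, hO, hsub, hcard, fun e he => ih (hnext e he)⟩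

/-- The edges of the complete graph on `V` claimed so far by Client and by Waiter. -/
structure Position (V : Type*) where
  client : Finset (Sym2 V)
  waiter : Finset (Sym2 V)

variable {U V : Type*} [DecidableEq V]

namespace Position

/-- The position reached when Client claims `e` and `f` goes to Waiter. -/
def claim (P : Position V) (e f : Sym2 V) : Position V :=
  ⟨insert e P.client, insert f P.waiter⟩

/-- The edge `e` may still be offered. -/
def Free (P : Position V) (e : Sym2 V) : Prop :=
  ¬ e.IsDiag ∧ e ∉ P.client ∧ e ∉ P.waiter

/-- The degree of `u` in Waiter's graph. -/
def waiterDegree (P : Position V) (u : V) : ℕ :=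
  #{e ∈ P.waiter | u ∈ e}

variable {P : Position V} {e f g : Sym2 V}

theorem free_claim : (P.claim e f).Free g ↔ P.Free g ∧ g ≠ e ∧ g ≠ f := by
  simp only [Free, claim, mem_insert]
  tauto

theorem Free.claim_star (h : P.Free g) {x a b : V} (hg : x ∉ g ∨ a ∉ g ∧ b ∉ g) :
    (P.claim s(x, a) s(x, b)).Free g := by
  refine free_claim.2 ⟨h, ?_, ?_⟩ <;> rintro rfl <;> simp at hg

theorem waiterDegree_claim (hf : P.Free f) (u : V) :
    (P.claim e f).waiterDegree u = P.waiterDegree u + if u ∈ f then 1 else 0 := by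
  simp only [waiterDegree, claim, filter_insert]
  split_ifs
  · exact card_insert_of_notMem (by simp [hf.2.2])
  · rfl

theorem card_filter_le_waiterDegree {ι : Type*} {A : Finset ι} {f : ι → V} (hf : Set.InjOn f A)
    (u : V) : #{i ∈ A | s(u, f i) ∈ P.waiter} ≤ P.waiterDegree u :=
  card_le_card_of_injOn (fun i => s(u, f i)) (fun i hi => by simp [(mem_filter.1 hi).2])
    fun i hi j hj hij => hf (mem_filter.1 hi).1 (mem_filter.1 hj).1 (Sym2.congr_right.1 hij)

end Position

variable [Fintype V]

/-- Within `t` rounds from `P`, offering two or no edges at `p` each time, Waiter can force a copy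
of `T` in which `p` represents `v`. The tree and the board have separate vertex types. -/
def Wins (T : SimpleGraph U) (v : U) (p : V) (t : ℕ) (P : Position V) : Prop :=
  WaiterWinsOffers (univ.filter fun e : Sym2 V => ¬ e.IsDiag) 1
    (fun O => #{e ∈ O | p ∈ e} = 0 ∨ #{e ∈ O | p ∈ e} = 2)
    (fun C _ => ∃ σ : U → V, Injective σ ∧ σ v = p ∧ ∀ x y, T.Adj x y → s(σ x, σ y) ∈ C)
    t P.client P.waiter

variable {T : SimpleGraph U} {v : U} {p : V} {t : ℕ} {P : Position V}

theorem Wins.of_free_of_free {e f : Sym2 V} (hef : e ≠ f) (he : P.Free e) (hf : P.Free f)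
    (hp : p ∈ e ↔ p ∈ f) (hclaim_e : Wins T v p t (P.claim e f))
    (hclaim_f : Wins T v p t (P.claim f e)) : Wins T v p (t + 1) P := by
  have hsub : {e, f} ⊆
      univ.filter (fun e : Sym2 V => ¬ e.IsDiag) \ (P.client ∪ P.waiter) := by
    simp [insert_subset_iff, he.1, he.2, hf.1, hf.2]
  have hcard := card_le_card hsub
  rw [card_pair hef] at hcard
  refine Or.inr ⟨{e, f}, by simp, ?_, hsub, ?_, ?_⟩
  · by_cases hpe : p ∈ e
    · exact Or.inr (by simp [filter_insert, filter_singleton, hpe, hp.1 hpe, hef])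
    · exact Or.inl (by simp [filter_insert, filter_singleton, hpe, mt hp.2 hpe])
  · rw [card_pair hef]
    omega
  · intro g hg
    rcases mem_insert.1 hg with rfl | hg
    · rw [erase_insert (by simpa using hef), union_singleton]
      exact hclaim_e
    · obtain rfl := mem_singleton.1 hg
      rw [pair_comm, erase_insert (by simpa using hef.symm), union_singleton]
      exact hclaim_f

theorem Wins.star {x a b : V} (hab : a ≠ b) (hpa : p ≠ a) (hpb : p ≠ b) (ha : P.Free s(x, a))
    (hb : P.Free s(x, b)) (hclaim_a : Wins T v p t (P.claim s(x, a) s(x, b)))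
    (hclaim_b : Wins T v p t (P.claim s(x, b) s(x, a))) : Wins T v p (t + 1) P :=
  .of_free_of_free (mt Sym2.congr_right.1 hab) ha hb (by simp [hpa, hpb]) hclaim_a hclaim_b

end Game

section PartialCopy

variable {U V : Type*}

/-- `φ` embeds the subgraph of `T` induced by `S`, which contains the root `v`, into Client's
graph `C` in such a way that `p` represents `v`. Values of `φ` off `S` are junk. -/
structure PartialCopy (T : SimpleGraph U) (v : U) (p : V) (S : Finset U) (φ : U → V)
    (C : Finset (Sym2 V)) : Prop where
  root_mem : v ∈ S
  map_root : φ v = p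
  injOn : Set.InjOn φ S
  edge_mem : ∀ x ∈ S, ∀ y ∈ S, T.Adj x y → s(φ x, φ y) ∈ C

variable {T : SimpleGraph U} {v : U} {p : V} {S S' : Finset U} {φ φ' : U → V}
  {C C' : Finset (Sym2 V)}

theorem PartialCopy.mono (h : PartialCopy T v p S φ C) (hv : v ∈ S') (hS : S' ⊆ S) (hC : C ⊆ C') :
    PartialCopy T v p S' φ C' where
  root_mem := hv
  map_root := h.map_root
  injOn := h.injOn.mono (mod_cast hS)
  edge_mem x hx y hy hxy := hC (h.edge_mem x (hS hx) y (hS hy) hxy)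

variable [DecidableEq V] [Fintype V]

theorem PartialCopy.wins [Fintype U] {t : ℕ} {P : Position V}
    (h : PartialCopy T v p univ φ P.client) : Wins T v p t P :=
  WaiterWinsOffers.of_win ⟨φ, Set.injOn_univ.1 (by simpa using h.injOn), h.map_root,
    fun x y => h.edge_mem x (mem_univ x) y (mem_univ y)⟩

/-- The vertices of the board which represent no vertex of `S`. -/
def unembedded (S : Finset U) (φ : U → V) : Finset V :=
  (S.image φ)ᶜ

theorem mem_unembedded {a : V} : a ∈ unembedded S φ ↔ ∀ x ∈ S, φ x ≠ a := by
  simp [unembedded]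

theorem card_unembedded (h : Set.InjOn φ S) : #(unembedded S φ) = Fintype.card V - #S := by
  rw [unembedded, card_compl, card_image_of_injOn h]

variable [DecidableEq U] {y : U} {a : V}

theorem unembedded_insert_update (hy : y ∉ S) :
    unembedded (insert y S) (update φ y a) = (unembedded S φ).erase a := by
  ext b
  simp only [mem_unembedded, mem_insert, mem_erase, update_apply]
  grind

theorem PartialCopy.embed (h : PartialCopy T v p S φ C) (hy : y ∉ S) (ha : a ∈ unembedded S φ)
    (hC : C ⊆ C') (hadj : ∀ x ∈ S, T.Adj x y → s(φ x, a) ∈ C') :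
    PartialCopy T v p (insert y S) (update φ y a) C' := by
  have hup : ∀ x ∈ S, update φ y a x = φ x := fun x hx =>
    update_of_ne (ne_of_mem_of_not_mem hx hy) ..
  rw [mem_unembedded] at ha
  refine ⟨mem_insert_of_mem h.root_mem, by rw [hup v h.root_mem, h.map_root], ?_, ?_⟩
  · rw [coe_insert, Set.injOn_insert (mod_cast hy)]
    refine ⟨(Set.EqOn.injOn_iff fun x hx => hup x hx).2 h.injOn, ?_⟩
    rintro ⟨x, hx, hxy⟩
    rw [hup x hx, update_self] at hxy
    exact ha x hx hxy
  · intro x hx z hz hxz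
    rcases mem_insert.1 hx with rfl | hxS <;> rcases mem_insert.1 hz with rfl | hzS
    · exact absurd rfl hxz.ne
    · rw [update_self, hup z hzS, Sym2.eq_swap]
      exact hadj z hzS hxz.symm
    · rw [update_self, hup x hxS]
      exact hadj x hxS hxz
    · rw [hup x hxS, hup z hzS]
      exact hC (h.edge_mem x hxS z hzS hxz)

end PartialCopy

section Greedy

variable {U V : Type*} [DecidableEq V] [Fintype V]

/-- The invariant of the greedy embedding of `T`. The last field is the potential of the box game
played at the unembedded vertices: it forces each of them to have at most `D` edges of Waiter. -/
structure GreedyState (T : SimpleGraph U) [DecidableRel T.Adj] (v : U) (p : V) (D : ℕ)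
    (S : Finset U) (φ : U → V) (P : Position V) : Prop
    extends PartialCopy T v p S φ P.client where
  exists_of_mem_client : ∀ e ∈ P.client, ∃ x ∈ S, ∃ y ∈ S, T.Adj x y ∧ e = s(φ x, φ y)
  exists_of_mem_waiter : ∀ e ∈ P.waiter, ∃ x ∈ S, φ x ∈ e
  waiterDegree_le : ∀ x ∈ S, P.waiterDegree (φ x) ≤ D + #{y ∈ S | T.Adj x y}
  potential_lt : ∑ u ∈ unembedded S φ, 2 ^ P.waiterDegree u < 2 ^ (D + 1)

namespace GreedyState

variable {T : SimpleGraph U} [DecidableRel T.Adj] {v : U} {p : V} {D : ℕ} {S : Finset U}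
  {φ : U → V} {P : Position V} {x y : U} {a b : V}

theorem singleton (hD : Fintype.card V < 2 ^ (D + 1)) :
    GreedyState T v p D {v} (fun _ => p) ⟨∅, ∅⟩ where
  root_mem := mem_singleton_self v
  map_root := rfl
  injOn := by simp
  edge_mem := by simp
  exists_of_mem_client := by simp
  exists_of_mem_waiter := by simp
  waiterDegree_le := by simp [Position.waiterDegree]
  potential_lt := by
    refine lt_of_le_of_lt ?_ hD
    simpa [Position.waiterDegree] using card_le_univ (unembedded {v} fun _ => p)

theorem waiterDegree_le_of_mem_unembedded (h : GreedyState T v p D S φ P)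
    (ha : a ∈ unembedded S φ) : P.waiterDegree a ≤ D := by
  have hle : 2 ^ P.waiterDegree a ≤ ∑ u ∈ unembedded S φ, 2 ^ P.waiterDegree u :=
    single_le_sum (f := fun u => 2 ^ P.waiterDegree u) (fun _ _ => Nat.zero_le _) ha
  exact Nat.lt_succ_iff.1 ((Nat.pow_lt_pow_iff_right one_lt_two).1 (hle.trans_lt h.potential_lt))

theorem notMem_client (h : GreedyState T v p D S φ P) (hb : b ∈ unembedded S φ) (a : V) :
    s(a, b) ∉ P.client := by
  intro hab
  obtain ⟨x, hx, y, hy, -, he⟩ := h.exists_of_mem_client _ hab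
  have hb' : b ∈ s(φ x, φ y) := he ▸ Sym2.mem_mk_right a b
  rw [mem_unembedded] at hb
  rcases Sym2.mem_iff.1 hb' with rfl | rfl
  · exact hb x hx rfl
  · exact hb y hy rfl

theorem adj_of_mem_client (h : GreedyState T v p D S φ P) (hx : x ∈ S) (hy : y ∈ S)
    (hxy : s(φ x, φ y) ∈ P.client) : T.Adj x y := by
  obtain ⟨x', hx', y', hy', hadj, he⟩ := h.exists_of_mem_client _ hxy
  rcases Sym2.eq_iff.1 he with ⟨hxx, hyy⟩ | ⟨hxy, hyx⟩
  · rwa [h.injOn hx hx' hxx, h.injOn hy hy' hyy]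
  · rw [h.injOn hx hy' hxy, h.injOn hy hx' hyx]
    exact hadj.symm

theorem free_of_notMem_waiter (h : GreedyState T v p D S φ P) (hx : x ∈ S)
    (hb : b ∈ unembedded S φ) (hW : s(φ x, b) ∉ P.waiter) : P.Free s(φ x, b) :=
  ⟨mem_unembedded.1 hb x hx, h.notMem_client hb _, hW⟩

theorem free_of_mem_unembedded (h : GreedyState T v p D S φ P) (ha : a ∈ unembedded S φ)
    (hb : b ∈ unembedded S φ) (hab : a ≠ b) : P.Free s(a, b) := by
  refine ⟨hab, h.notMem_client hb _, fun hW => ?_⟩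
  obtain ⟨x, hx, hxe⟩ := h.exists_of_mem_waiter _ hW
  rcases Sym2.mem_iff.1 hxe with rfl | rfl
  · exact mem_unembedded.1 ha x hx rfl
  · exact mem_unembedded.1 hb x hx rfl

theorem card_waiter_neighbors_le (h : GreedyState T v p D S φ P) (hx : x ∈ S) :
    #{b ∈ unembedded S φ | s(φ x, b) ∈ P.waiter} ≤ D + #{y ∈ S | T.Adj x y} :=
  (Position.card_filter_le_waiterDegree (Set.injOn_id _) _).trans (h.waiterDegree_le x hx)

variable [DecidableEq U]

theorem embed {P' : Position V} (h : GreedyState T v p D S φ P) (hy : y ∉ S)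
    (ha : a ∈ unembedded S φ) (hC : P.client ⊆ P'.client)
    (hadj : ∀ x ∈ S, T.Adj x y → s(φ x, a) ∈ P'.client)
    (hclient : ∀ e ∈ P'.client, e ∈ P.client ∨ ∃ x ∈ S, T.Adj x y ∧ e = s(φ x, a))
    (hwaiter : ∀ e ∈ P'.waiter, e ∈ P.waiter ∨ ∃ x ∈ S, φ x ∈ e)
    (hdeg : ∀ x ∈ S, P'.waiterDegree (φ x) ≤ P.waiterDegree (φ x) + if T.Adj x y then 1 else 0)
    (hdeg_a : P'.waiterDegree a ≤ P.waiterDegree a)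
    (hpot : ∑ u ∈ (unembedded S φ).erase a, 2 ^ P'.waiterDegree u ≤
      ∑ u ∈ unembedded S φ, 2 ^ P.waiterDegree u) :
    GreedyState T v p D (insert y S) (update φ y a) P' := by
  have hup : ∀ x ∈ S, update φ y a x = φ x := fun x hx =>
    update_of_ne (ne_of_mem_of_not_mem hx hy) ..
  refine ⟨h.toPartialCopy.embed hy ha hC hadj, ?_, ?_, ?_, ?_⟩
  · intro e he
    rcases hclient e he with he | ⟨x, hx, hxy, rfl⟩
    · obtain ⟨x, hx, z, hz, hxz, rfl⟩ := h.exists_of_mem_client e he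
      exact ⟨x, mem_insert_of_mem hx, z, mem_insert_of_mem hz, hxz, by rw [hup x hx, hup z hz]⟩
    · exact ⟨x, mem_insert_of_mem hx, y, mem_insert_self y S, hxy,
        by rw [hup x hx, update_self]⟩
  · intro e he
    obtain ⟨x, hx, hxe⟩ := (hwaiter e he).elim (h.exists_of_mem_waiter e) id
    exact ⟨x, mem_insert_of_mem hx, by rwa [hup x hx]⟩
  · intro x hx
    rcases mem_insert.1 hx with rfl | hx
    · rw [update_self]
      exact (hdeg_a.trans (h.waiterDegree_le_of_mem_unembedded ha)).trans (Nat.le_add_right _ _)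
    · rw [hup x hx]
      have hcard : #{z ∈ insert y S | T.Adj x z} =
          #{z ∈ S | T.Adj x z} + if T.Adj x y then 1 else 0 := by
        rw [filter_insert]
        split_ifs
        · exact card_insert_of_notMem (by simp [hy])
        · rfl
      have := hdeg x hx
      have := h.waiterDegree_le x hx
      omega
  · rw [unembedded_insert_update hy]
    exact hpot.trans_lt h.potential_lt

theorem embed_of_forall_not_adj (h : GreedyState T v p D S φ P) (hy : y ∉ S)
    (hadj : ∀ x ∈ S, ¬ T.Adj x y) (ha : a ∈ unembedded S φ) :
    GreedyState T v p D (insert y S) (update φ y a) P :=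
  h.embed hy ha subset_rfl (fun x hx hxy => absurd hxy (hadj x hx)) (fun _ => Or.inl)
    (fun _ => Or.inl) (fun _ _ => Nat.le_add_right _ _) le_rfl
    (sum_le_sum_of_subset (erase_subset _ _))

theorem embed_claim (h : GreedyState T v p D S φ P) (hx : x ∈ S) (hy : y ∉ S)
    (hadj : ∀ w ∈ S, T.Adj w y ↔ w = x) (ha : a ∈ unembedded S φ) (hb : b ∈ unembedded S φ)
    (hab : a ≠ b) (hfree : P.Free s(φ x, b)) (hdeg : P.waiterDegree a = P.waiterDegree b) :
    GreedyState T v p D (insert y S) (update φ y a)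
      (P.claim s(φ x, a) s(φ x, b)) := by
  have hdeg_of_ne : ∀ u, u ≠ φ x → u ≠ b →
      (P.claim s(φ x, a) s(φ x, b)).waiterDegree u = P.waiterDegree u := by
    intro u hux hub
    rw [Position.waiterDegree_claim hfree, if_neg (by simp [hux, hub]), add_zero]
  have hne : ∀ u ∈ unembedded S φ, u ≠ φ x := fun u hu => (mem_unembedded.1 hu x hx).symm
  refine h.embed hy ha (subset_insert _ _) ?_ ?_ ?_ ?_ ?_ ?_
  · intro w hw hwy
    rw [(hadj w hw).1 hwy]
    exact mem_insert_self ..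
  · intro e he
    rcases mem_insert.1 he with rfl | he
    · exact Or.inr ⟨x, hx, (hadj x hx).2 rfl, rfl⟩
    · exact Or.inl he
  · intro e he
    rcases mem_insert.1 he with rfl | he
    · exact Or.inr ⟨x, hx, Sym2.mem_mk_left ..⟩
    · exact Or.inl he
  · intro w hw
    by_cases hwx : w = x
    · rw [if_pos ((hadj w hw).2 hwx), Position.waiterDegree_claim hfree]
      split_ifs <;> omega
    · rw [hdeg_of_ne _ (h.injOn.ne hw hx hwx) (mem_unembedded.1 hb w hw)]
      exact Nat.le_add_right _ _
  · exact (hdeg_of_ne a (hne a ha) hab).le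
  · -- The weight of `b` doubles, but this is paid for by the equal weight of `a`.
    have hb' : b ∈ (unembedded S φ).erase a := mem_erase.2 ⟨hab.symm, hb⟩
    have hrest : ∀ u ∈ ((unembedded S φ).erase a).erase b,
        2 ^ (P.claim s(φ x, a) s(φ x, b)).waiterDegree u = 2 ^ P.waiterDegree u := by
      intro u hu
      obtain ⟨hub, -, hu⟩ := by simpa only [mem_erase] using hu
      rw [hdeg_of_ne u (hne u hu) hub]
    rw [← add_sum_erase _ _ ha, ← add_sum_erase _ _ hb', ← add_sum_erase _ _ hb',
      sum_congr rfl hrest, Position.waiterDegree_claim hfree,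
      if_pos (Sym2.mem_mk_right ..), pow_succ, hdeg]
    omega

theorem free_of_embed_claim (h : GreedyState T v p D S φ P)
    (hx : x ∈ S) (hy : y ∉ S) (ha : a ∈ unembedded S φ) :
    ∀ u ∈ unembedded (insert y S) (update φ y a),
      (P.claim s(φ x, a) s(φ x, b)).Free s(update φ y a y, u) := by
  intro u hu
  rw [unembedded_insert_update hy, mem_erase] at hu
  rw [update_self]
  have hxa := mem_unembedded.1 ha x hx
  have hxu := mem_unembedded.1 hu.2 x hx
  exact (h.free_of_mem_unembedded ha hu.2 hu.1.symm).claim_star (by simp [hxa, hxu])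

theorem wins_succ_of_embed {t : ℕ} (h : GreedyState T v p D S φ P) (hx : x ∈ S) (hy : y ∉ S)
    (hadj : ∀ w ∈ S, T.Adj w y ↔ w = x)
    (hcard : 2 * D + 2 + #{z ∈ S | T.Adj x z} + #S ≤ Fintype.card V)
    (hnext : ∀ a b, a ≠ b → a ∈ unembedded S φ → b ∈ unembedded S φ →
      GreedyState T v p D (insert y S) (update φ y a) (P.claim s(φ x, a) s(φ x, b)) →
      Wins T v p t (P.claim s(φ x, a) s(φ x, b))) : Wins T v p (t + 1) P := by
  have hsplit := card_filter_add_card_filter_not (s := unembedded S φ)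
    (fun b => s(φ x, b) ∈ P.waiter)
  rw [card_unembedded h.injOn] at hsplit
  have hwaiter := h.card_waiter_neighbors_le hx
  obtain ⟨a, ha, b, hb, hab, hdeg⟩ := exists_ne_map_eq_of_card_lt_of_maps_to
    (s := {b ∈ unembedded S φ | s(φ x, b) ∉ P.waiter}) (t := range (D + 1))
    (f := P.waiterDegree) (by rw [card_range]; omega) fun u hu => mem_coe.2 <| mem_range.2 <|
      Nat.lt_succ_iff.2 <| h.waiterDegree_le_of_mem_unembedded (mem_filter.1 hu).1
  obtain ⟨haR, haW⟩ := mem_filter.1 ha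
  obtain ⟨hbR, hbW⟩ := mem_filter.1 hb
  have hne : ∀ u ∈ unembedded S φ, p ≠ u := fun u hu =>
    h.map_root ▸ mem_unembedded.1 hu v h.root_mem
  have hfree_a := h.free_of_notMem_waiter hx haR haW
  have hfree_b := h.free_of_notMem_waiter hx hbR hbW
  exact .star hab (hne a haR) (hne b hbR) hfree_a hfree_b
    (hnext a b hab haR hbR (h.embed_claim hx hy hadj haR hbR hab hfree_b hdeg))
    (hnext b a hab.symm hbR haR (h.embed_claim hx hy hadj hbR haR hab.symm hfree_a hdeg.symm))

end GreedyState

end Greedy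

section ParentMap

variable {U V : Type*}

/-- `par` maps every vertex `y ≠ v` of the tree `T` rooted at `v` to its parent, and `v` to
itself. -/
structure IsParentMap (T : SimpleGraph U) (v : U) (par : U → U) : Prop where
  map_root : par v = v
  adj_iff : ∀ x y, T.Adj x y ↔ (y ≠ v ∧ par y = x) ∨ (x ≠ v ∧ par x = y)
  dist_lt : ∀ y, y ≠ v → T.dist v (par y) < T.dist v y

variable {T : SimpleGraph U} {v : U}

theorem exists_isParentMap (hT : T.IsTree) (v : U) : ∃ par, IsParentMap T v par := by
  classical
  choose q hq hlen using fun y => hT.connected.exists_path_of_dist v y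
  have hle : ∀ y, ∀ x ∈ (q y).support, T.dist v x ≤ T.dist v y := fun y x hx =>
    (T.dist_le ((q y).takeUntil x hx)).trans (hlen y ▸ (q y).length_takeUntil_le_length hx)
  have hpen : ∀ x y, T.Adj x y → T.dist v y = T.dist v x + 1 → (q y).penultimate = x := by
    intro x y hxy hdist
    have hy : y ∉ (q x).support := fun hy => by have := hle x y hy; omega
    exact (hT.isAcyclic.eq_penultimate_of_adj_end (hq y) hxy.symm <|
      hT.isAcyclic.mem_support_of_ne_mem_support_of_adj_of_isPath (hq y) (hq x) hxy.symm hy).symm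
  have hadj : ∀ y, y ≠ v → T.Adj (q y).penultimate y := fun y hy =>
    (q y).adj_penultimate fun h => hy h.eq.symm
  have hne : ∀ x y, T.dist v y = T.dist v x + 1 → y ≠ v := by
    rintro x y hdist rfl
    simp at hdist
  refine ⟨fun y => (q y).penultimate, ?_, fun x y => ⟨fun hxy => ?_, ?_⟩, fun y hy => ?_⟩
  · simpa [hT.connected.dist_eq_zero_iff, eq_comm] using hle v _ ((q v).getVert_mem_support _)
  · rcases hT.dist_eq_dist_add_one_of_adj v hxy with hdist | hdist
    · exact Or.inr ⟨hne y x hdist, hpen y x hxy.symm hdist⟩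
    · exact Or.inl ⟨hne x y hdist, hpen x y hxy hdist⟩
  · rintro (⟨hy, rfl⟩ | ⟨hx, rfl⟩)
    · exact hadj y hy
    · exact (hadj x hx).symm
  · exact lt_of_le_of_ne (hle y _ ((q y).getVert_mem_support _))
      (hT.dist_ne_of_adj v (hadj y hy))

theorem IsParentMap.mem_neighborFinset_iff [Fintype (T.neighborSet v)] {par : U → U}
    (hpar : IsParentMap T v par) {y : U} (hy : y ≠ v) : y ∈ T.neighborFinset v ↔ par y = v := by
  simp [hpar.adj_iff v y, hy]

variable [DecidableRel T.Adj] [DecidableEq U] [DecidableEq V] [Fintype V] {p : V} {D t : ℕ}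
  {S₀ S₁ : Finset U} {φ : U → V} {P : Position V} {par : U → U}

theorem GreedyState.wins_of_subset (hpar : IsParentMap T v par) (hS : S₀ ⊆ S₁)
    (hclosed : ∀ w ∈ S₀, w ≠ v → par w ∈ S₁ → par w ∈ S₀)
    (hmem : ∀ y ∈ S₁ \ S₀, par y ∈ S₁)
    (hcard : ∀ y ∈ S₁ \ S₀,
      2 * D + 2 + #{z ∈ S₁ | T.Adj (par y) z} + #S₁ ≤ Fintype.card V)
    (hnext : ∀ φ P, GreedyState T v p D S₁ φ P → Wins T v p t P)
    (h : GreedyState T v p D S₀ φ P) : Wins T v p (t + #(S₁ \ S₀)) P := by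
  induction hk : #(S₁ \ S₀) generalizing S₀ φ P with
  | zero =>
    obtain rfl : S₀ = S₁ := hS.antisymm (sdiff_eq_empty_iff_subset.1 (card_eq_zero.1 hk))
    exact hnext φ P h
  | succ k ih =>
    obtain ⟨y, hy, hmin⟩ := exists_min_image (S₁ \ S₀) (T.dist v) (card_pos.1 (by omega))
    obtain ⟨hyS₁, hyS₀⟩ := mem_sdiff.1 hy
    have hyv : y ≠ v := fun hyv => hyS₀ (hyv ▸ h.root_mem)
    have hpar_mem : par y ∈ S₀ := by
      by_contra hnot
      exact (hmin _ (mem_sdiff.2 ⟨hmem y hy, hnot⟩)).not_gt (hpar.dist_lt y hyv)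
    have hadj : ∀ w ∈ S₀, T.Adj w y ↔ w = par y := by
      refine fun w hw => ⟨fun hwy => ?_, fun hw => (hpar.adj_iff w y).2 (Or.inl ⟨hyv, hw.symm⟩)⟩
      rcases (hpar.adj_iff w y).1 hwy with ⟨-, hpy⟩ | ⟨hwv, rfl⟩
      · exact hpy.symm
      · exact absurd (hclosed w hw hwv hyS₁) hyS₀
    have hsdiff : S₁ \ insert y S₀ ⊆ S₁ \ S₀ := sdiff_subset_sdiff subset_rfl (subset_insert _ _)
    rw [← add_assoc]
    refine h.wins_succ_of_embed hpar_mem hyS₀ hadj ?_ fun a b _ _ _ hstate =>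
      ih (insert_subset hyS₁ hS) ?_ (fun z hz => hmem z (hsdiff hz))
        (fun z hz => hcard z (hsdiff hz)) hstate ?_
    · refine le_trans ?_ (hcard y hy)
      gcongr
    · intro w hw hwv hwS₁
      rcases mem_insert.1 hw with rfl | hw
      · exact mem_insert_of_mem hpar_mem
      · exact mem_insert_of_mem (hclosed w hw hwv hwS₁)
    · rw [sdiff_insert, card_erase_of_mem hy, hk, Nat.add_sub_cancel]

variable [Fintype U]

omit [DecidableEq U] in
theorem card_filter_adj_le_degree (S : Finset U) (x : U) : #{z ∈ S | T.Adj x z} ≤ T.degree x :=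
  card_le_card fun z hz => (T.mem_neighborFinset x z).2 (mem_filter.1 hz).2

theorem GreedyState.wins_of_root_neighbors (hpar : IsParentMap T v par)
    (hclosed : ∀ w ∈ S₀, w ≠ v → par w ∈ S₀ ∪ T.neighborFinset v → par w ∈ S₀)
    (hroot : 2 * D + 2 + T.degree v + #(S₀ ∪ T.neighborFinset v) ≤ Fintype.card V)
    (hnext : ∀ φ P, GreedyState T v p D (S₀ ∪ T.neighborFinset v) φ P → Wins T v p t P)
    (h : GreedyState T v p D S₀ φ P) :
    Wins T v p (t + #((S₀ ∪ T.neighborFinset v) \ S₀)) P := by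
  have hpar_eq : ∀ y ∈ (S₀ ∪ T.neighborFinset v) \ S₀, par y = v := by
    intro y hy
    obtain ⟨hy, hyS₀⟩ := mem_sdiff.1 hy
    have hyv : y ≠ v := fun hyv => hyS₀ (hyv ▸ h.root_mem)
    exact (hpar.mem_neighborFinset_iff hyv).1 ((mem_union.1 hy).resolve_left hyS₀)
  refine h.wins_of_subset hpar subset_union_left hclosed (fun y hy => ?_) (fun y hy => ?_) hnext
  · rw [hpar_eq y hy]
    exact mem_union_left _ h.root_mem
  · rw [hpar_eq y hy]
    have := card_filter_adj_le_degree (T := T) (S₀ ∪ T.neighborFinset v) v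
    omega

/-- The degree of the root may exceed the room left on the board at the end, so its neighbours have
to be embedded first. -/
theorem GreedyState.wins_of_root_neighbors_subset {d : ℕ} (hpar : IsParentMap T v par)
    (hS : S₀ ⊆ S₁) (hclosed : ∀ w ∈ S₀, w ≠ v → par w ∈ S₁ → par w ∈ S₀)
    (hmem : ∀ y ∈ S₁ \ S₀, par y ∈ S₁) (hnbr : T.neighborFinset v ⊆ S₁)
    (hroot : 2 * D + 2 + T.degree v + #(S₀ ∪ T.neighborFinset v) ≤ Fintype.card V)
    (hdeg : ∀ x, x ≠ v → T.degree x ≤ d) (hcard : 2 * D + 2 + d + #S₁ ≤ Fintype.card V)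
    (hnext : ∀ φ P, GreedyState T v p D S₁ φ P → Wins T v p t P)
    (h : GreedyState T v p D S₀ φ P) : Wins T v p (t + #(S₁ \ S₀)) P := by
  have hS₀S : S₀ ⊆ S₀ ∪ T.neighborFinset v := subset_union_left
  have hSS₁ : S₀ ∪ T.neighborFinset v ⊆ S₁ := union_subset hS hnbr
  have hsplit : #(S₁ \ S₀) =
      #(S₁ \ (S₀ ∪ T.neighborFinset v)) + #((S₀ ∪ T.neighborFinset v) \ S₀) := by
    have := card_sdiff_add_card_eq_card hS
    have := card_sdiff_add_card_eq_card hS₀S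
    have := card_sdiff_add_card_eq_card hSS₁
    omega
  rw [hsplit, ← add_assoc]
  refine h.wins_of_root_neighbors hpar (fun w hw hwv hpw => hclosed w hw hwv (hSS₁ hpw)) hroot
    fun φ P hstate => hstate.wins_of_subset hpar hSS₁ (fun w hw hwv hpw => ?_)
      (fun y hy => hmem y (sdiff_subset_sdiff subset_rfl hS₀S hy)) (fun y hy => ?_) hnext
  · rcases mem_union.1 hw with hw | hw
    · exact hS₀S (hclosed w hw hwv hpw)
    · rw [(hpar.mem_neighborFinset_iff hwv).1 hw]
      exact hS₀S h.root_mem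
  · obtain ⟨-, hyS⟩ := mem_sdiff.1 hy
    have hyv : y ≠ v := fun hyv => hyS (hyv ▸ hS₀S h.root_mem)
    have hpy : par y ≠ v := fun hpy =>
      hyS (mem_union_right _ ((hpar.mem_neighborFinset_iff hyv).2 hpy))
    have := hdeg (par y) hpy
    have := card_filter_adj_le_degree (T := T) S₁ (par y)
    omega

end ParentMap

section Dichotomy

variable {U : Type*}

/-- `c 0, …, c m` is a path going up the tree `T` with parent map `par`, missing the root `v`, on
which every `c j` with `1 ≤ j` has `c (j - 1)` as its only child. -/
structure IsBarePath (T : SimpleGraph U) (v : U) (par : U → U) (c : ℕ → U) (m : ℕ) : Prop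
    extends IsParentMap T v par where
  ne_root : ∀ j ≤ m, c j ≠ v
  par_eq : ∀ j < m, par (c j) = c (j + 1)
  eq_of_par_eq : ∀ j < m, ∀ w, w ≠ v → par w = c (j + 1) → w = c j

/-- `l` assigns to each vertex of `X` a leaf of `T` attached to it; `X`, the set of these leaves
and the root `v` are disjoint. -/
structure IsLeafFamily (T : SimpleGraph U) (v : U) (X : Finset U) (l : U → U) : Prop where
  ne_root : ∀ x ∈ X, x ≠ v
  leaf_ne_root : ∀ x ∈ X, l x ≠ v
  leaf_notMem : ∀ x ∈ X, l x ∉ X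
  adj_iff : ∀ x ∈ X, ∀ w, T.Adj w (l x) ↔ w = x

variable [Fintype U] [DecidableEq U]

/-- The children of `x` in the tree with parent map `par` and root `v`. -/
def children (v : U) (par : U → U) (x : U) : Finset U :=
  {y | y ≠ v ∧ par y = x}

/-- The vertices without children, in the tree with parent map `par` and root `v`. -/
def leaves (v : U) (par : U → U) : Finset U :=
  {y | y ≠ v ∧ children v par y = ∅}

/-- The interior vertices of bare paths: exactly one child, which is not a leaf. -/
def chainVertices (v : U) (par : U → U) : Finset U :=
  {x | x ≠ v ∧ x ∉ (leaves v par).image par ∧ #(children v par x) = 1}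

variable {T : SimpleGraph U} {v : U} {par : U → U} {x y : U}

theorem mem_children : y ∈ children v par x ↔ y ≠ v ∧ par y = x := by
  simp [children]

theorem mem_leaves : y ∈ leaves v par ↔ y ≠ v ∧ children v par y = ∅ := by
  simp [leaves]

theorem mem_chainVertices : x ∈ chainVertices v par ↔
    x ≠ v ∧ x ∉ (leaves v par).image par ∧ #(children v par x) = 1 := by
  simp [chainVertices]

theorem chainVertices_subset : chainVertices v par ⊆ (leaves v par)ᶜ := by
  intro x hx
  refine mem_compl.2 fun hleaf => ?_
  simp [mem_chainVertices, (mem_leaves.1 hleaf).2] at hx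

theorem par_notMem_leaves (hy : y ≠ v) : par y ∉ leaves v par := fun h =>
  notMem_empty y ((mem_leaves.1 h).2 ▸ mem_children.2 ⟨hy, rfl⟩)

theorem children_subset_of_notMem_image (hx : x ∉ (leaves v par).image par) :
    children v par x ⊆ (leaves v par)ᶜ := fun y hy =>
  mem_compl.2 fun hleaf => hx (mem_image.2 ⟨y, hleaf, (mem_children.1 hy).2⟩)

theorem card_compl_leaves_sdiff_chainVertices_le :
    #((leaves v par)ᶜ \ chainVertices v par) ≤ 2 * #((leaves v par).image par) + 1 := by
  set I := (leaves v par)ᶜ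
  set X := (leaves v par).image par
  set Y := (I \ chainVertices v par) \ insert v X
  have hsub : chainVertices v par ⊆ I := chainVertices_subset
  have hvI : v ∈ I := by simp [I, mem_leaves]
  have hchildren : ∀ x ∉ X, {y ∈ I.erase v | par y = x} = children v par x := by
    intro x hx
    ext y
    have := @children_subset_of_notMem_image _ _ _ v par x hx y
    simp only [mem_filter, mem_erase, mem_children] at this ⊢
    tauto
  have hsum : #I - 1 = ∑ x ∈ I, #{y ∈ I.erase v | par y = x} := by
    rw [← card_erase_of_mem hvI]
    exact card_eq_sum_card_fiberwise fun y hy =>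
      mem_compl.2 (par_notMem_leaves (mem_erase.1 hy).1)
  have hchain : #(chainVertices v par) =
      ∑ x ∈ chainVertices v par, #{y ∈ I.erase v | par y = x} := by
    rw [card_eq_sum_ones]
    refine sum_congr rfl fun x hx => ?_
    obtain ⟨-, hxX, hcard⟩ := mem_chainVertices.1 hx
    rw [hchildren x hxX, hcard]
  have hbranch : 2 * #Y ≤ ∑ x ∈ I \ chainVertices v par, #{y ∈ I.erase v | par y = x} := by
    rw [mul_comm, ← smul_eq_mul]
    refine (card_nsmul_le_sum _ _ 2 fun x hx => ?_).trans (sum_le_sum_of_subset sdiff_subset)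
    obtain ⟨⟨hxI, hxchain⟩, hxv, hxX⟩ := by
      simpa only [Y, mem_sdiff, mem_insert, not_or] using hx
    have hpos : 0 < #(children v par x) := card_pos.2 <| nonempty_iff_ne_empty.2 fun h =>
      mem_compl.1 hxI (mem_leaves.2 ⟨hxv, h⟩)
    have hone : #(children v par x) ≠ 1 := fun h => hxchain (mem_chainVertices.2 ⟨hxv, hxX, h⟩)
    rw [hchildren x hxX]
    omega
  have hsplit := sum_sdiff (f := fun x => #{y ∈ I.erase v | par y = x}) hsub
  have hI := card_sdiff_add_card_eq_card hsub
  have hY : #(I \ chainVertices v par) ≤ #Y + #(insert v X) := card_le_card_sdiff_add_card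
  have hX := card_insert_le v X
  have hIpos : 0 < #I := card_pos.2 ⟨v, hvI⟩
  omega

theorem IsParentMap.exists_iterate_eq (hpar : IsParentMap T v par) (hx : x ∉ leaves v par) :
    ∃ z ∈ (leaves v par)ᶜ \ chainVertices v par, ∃ i, par^[i] z = x ∧
      ∀ j < i, par^[j + 1] z ∈ chainVertices v par := by
  classical
  by_contra hnot
  obtain ⟨y, hy, hmax⟩ := exists_max_image
    {x | x ∉ leaves v par ∧ ¬ ∃ z ∈ (leaves v par)ᶜ \ chainVertices v par, ∃ i, par^[i] z = x ∧
      ∀ j < i, par^[j + 1] z ∈ chainVertices v par} (T.dist v) ⟨x, by simpa [hx] using hnot⟩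
  obtain ⟨hyleaf, hy⟩ := (mem_filter.1 hy).2
  by_cases hychain : y ∈ chainVertices v par
  · obtain ⟨-, hyX, hcard⟩ := mem_chainVertices.1 hychain
    obtain ⟨w, hw⟩ := card_pos.1 (hcard ▸ one_pos)
    have hwleaf := mem_compl.1 (children_subset_of_notMem_image hyX hw)
    obtain ⟨hwv, rfl⟩ := mem_children.1 hw
    obtain ⟨z, hz, i, rfl, hi⟩ : ∃ z ∈ (leaves v par)ᶜ \ chainVertices v par, ∃ i,
        par^[i] z = w ∧ ∀ j < i, par^[j + 1] z ∈ chainVertices v par := by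
      by_contra hw
      exact (hpar.dist_lt w hwv).not_ge (hmax w (by simpa [hwleaf] using hw))
    refine hy ⟨z, hz, i + 1, iterate_succ_apply' .., fun j hj => ?_⟩
    rcases Nat.lt_succ_iff_lt_or_eq.1 hj with hj | rfl
    · exact hi j hj
    · rwa [iterate_succ_apply']
  · exact hy ⟨y, by simp [hyleaf, hychain], 0, rfl, by simp⟩

theorem IsParentMap.isBarePath_iterate (hpar : IsParentMap T v par) {z : U} {m : ℕ} (hm : 0 < m)
    (hz : ∀ j < m, par^[j + 1] z ∈ chainVertices v par) :
    IsBarePath T v par (fun j => par^[j] z) m := by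
  have hne : ∀ j ≤ m, par^[j] z ≠ v := by
    rintro (_ | j) hj
    · rintro rfl
      exact (mem_chainVertices.1 (hz 0 hm)).1 hpar.map_root
    · exact (mem_chainVertices.1 (hz j hj)).1
  refine ⟨hpar, hne, fun j _ => (iterate_succ_apply' ..).symm, fun j hj w hwv hw => ?_⟩
  have hcard := (mem_chainVertices.1 (hz j hj)).2.2
  exact card_le_one.1 hcard.le w (mem_children.2 ⟨hwv, hw⟩) _
    (mem_children.2 ⟨hne j hj.le, (iterate_succ_apply' ..).symm⟩)

theorem IsParentMap.exists_isLeafFamily (hpar : IsParentMap T v par)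
    (hchild : ∀ y, y ≠ v → par y = v → (children v par y).Nonempty) {r : ℕ}
    (hr : r ≤ #((leaves v par).image par)) :
    ∃ (X : Finset U) (l : U → U), #X = r ∧ IsLeafFamily T v X l := by
  obtain ⟨X, hX, hcard⟩ := exists_subset_card_eq hr
  have hleaf : ∀ x ∈ X, ∃ y ∈ leaves v par, par y = x := fun x hx => mem_image.1 (hX hx)
  choose! l hl hlpar using hleaf
  have hlne : ∀ x ∈ X, l x ≠ v := fun x hx => (mem_leaves.1 (hl x hx)).1
  refine ⟨X, l, hcard, ?_, hlne, ?_, ?_⟩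
  · rintro x hx rfl
    exact (hchild (l x) (hlne x hx) (hlpar x hx)).ne_empty (mem_leaves.1 (hl x hx)).2
  · intro x hx hlx
    exact par_notMem_leaves (hlne _ hlx) (hlpar _ hlx ▸ hl x hx)
  · intro x hx w
    rw [hpar.adj_iff w (l x), hlpar x hx]
    refine ⟨?_, fun hw => Or.inl ⟨hlne x hx, hw.symm⟩⟩
    rintro (⟨-, rfl⟩ | ⟨hwv, hw⟩)
    · rfl
    · exact absurd (hw ▸ hl x hx) (par_notMem_leaves hwv)

theorem IsParentMap.exists_isBarePath (hpar : IsParentMap T v par) {m : ℕ} (hm : 0 < m)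
    (hcard : (2 * #((leaves v par).image par) + 1) * m < #(leaves v par)ᶜ) :
    ∃ c, IsBarePath T v par c m := by
  by_contra hnot
  have hshort : ∀ z, ∃ j < m, par^[j + 1] z ∉ chainVertices v par := by
    intro z
    by_contra! hz
    exact hnot ⟨_, hpar.isBarePath_iterate hm hz⟩
  have hcover : (leaves v par)ᶜ ⊆
      (((leaves v par)ᶜ \ chainVertices v par) ×ˢ range m).image fun q => par^[q.2] q.1 := by
    intro x hx
    obtain ⟨z, hz, i, rfl, hi⟩ := hpar.exists_iterate_eq (mem_compl.1 hx)
    obtain ⟨j, hjm, hj⟩ := hshort z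
    have hij : i ≤ j := not_lt.1 fun hji => hj (hi j hji)
    exact mem_image.2 ⟨(z, i), mem_product.2 ⟨hz, mem_range.2 (hij.trans_lt hjm)⟩, rfl⟩
  refine hcard.not_ge (((card_le_card hcover).trans card_image_le).trans ?_)
  rw [card_product, card_range]
  exact Nat.mul_le_mul_right m card_compl_leaves_sdiff_chainVertices_le

theorem IsParentMap.exists_isLeafFamily_or_isBarePath (hpar : IsParentMap T v par)
    (hchild : ∀ y, y ≠ v → par y = v → (children v par y).Nonempty) {Δ r m : ℕ}
    (hΔ : ∀ x, x ≠ v → #(children v par x) ≤ Δ) (hm : 0 < m)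
    (hcard : r * Δ + (2 * r + 1) * m < Fintype.card U) :
    (∃ (X : Finset U) (l : U → U), #X = r ∧ IsLeafFamily T v X l) ∨
      ∃ c, IsBarePath T v par c m := by
  rcases le_or_gt r #((leaves v par).image par) with hr | hr
  · exact Or.inl (hpar.exists_isLeafFamily hchild hr)
  · refine Or.inr (hpar.exists_isBarePath hm ?_)
    have hleaves : #(leaves v par) ≤ Δ * #((leaves v par).image par) := by
      refine card_le_mul_card_image _ _ fun x hx => ?_
      obtain ⟨y, hy, rfl⟩ := mem_image.1 hx
      refine (card_le_card fun z hz => ?_).trans (hΔ (par y) fun hyv => ?_)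
      · obtain ⟨hz, hzy⟩ := mem_filter.1 hz
        exact mem_children.2 ⟨(mem_leaves.1 hz).1, hzy⟩
      · exact (hchild y (mem_leaves.1 hy).1 hyv).ne_empty (mem_leaves.1 hy).2
    have hcompl := card_add_card_compl (leaves v par)
    nlinarith [Nat.mul_le_mul_left Δ hr.le, Nat.mul_le_mul_right m hr.le]

end Dichotomy

section BarePath

variable {U V : Type*} {T : SimpleGraph U} {v : U} {par : U → U} {c : ℕ → U} {m : ℕ}

namespace IsBarePath

theorem adj_succ (hc : IsBarePath T v par c m) {j : ℕ} (hj : j < m) : T.Adj (c j) (c (j + 1)) :=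
  (hc.adj_iff _ _).2 (Or.inr ⟨hc.ne_root j hj.le, hc.par_eq j hj⟩)

theorem eq_or_eq_of_adj (hc : IsBarePath T v par c m) {j : ℕ} (hj : j + 1 < m) {w : U}
    (hw : T.Adj w (c (j + 1))) : w = c j ∨ w = c (j + 2) := by
  rcases (hc.adj_iff _ _).1 hw with ⟨-, hpar⟩ | ⟨hwv, hpar⟩
  · exact Or.inr (by rw [← hpar, hc.par_eq (j + 1) hj])
  · exact Or.inl (hc.eq_of_par_eq j (by omega) w hwv hpar)

theorem injOn (hc : IsBarePath T v par c m) : Set.InjOn c (Set.Iic m) := by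
  have hanti : StrictAntiOn (fun j => T.dist v (c j)) (Set.Iic m) :=
    strictAntiOn_of_succ_lt Set.ordConnected_Iic fun j _ _ hj => by
      rw [Nat.succ_eq_succ, Set.mem_Iic] at hj
      rw [Nat.succ_eq_succ, ← hc.par_eq j (by omega)]
      exact hc.dist_lt _ (hc.ne_root j (by omega))
  exact fun i hi j hj hij => hanti.injOn hi hj (congrArg (T.dist v) hij)

theorem eq_iff (hc : IsBarePath T v par c m) {i j : ℕ} (hi : i ≤ m) (hj : j ≤ m) :
    c i = c j ↔ i = j :=
  hc.injOn.eq_iff hi hj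

theorem card_image_Ico [DecidableEq U] (hc : IsBarePath T v par c m) {J : ℕ} (hJm : J ≤ m + 1) :
    #((Ico 2 J).image c) = J - 2 := by
  rw [card_image_of_injOn, Nat.card_Ico]
  exact hc.injOn.mono fun j hj => by
    have := (mem_Ico.1 hj).2
    exact Set.mem_Iic.2 (by omega)

end IsBarePath

variable [Fintype U] [DecidableEq U]

/-- All vertices of the tree except `c 2, …, c (J - 1)`. -/
def offPath (c : ℕ → U) (J : ℕ) : Finset U :=
  ((Ico 2 J).image c)ᶜ

variable {J : ℕ}

theorem mem_offPath {x : U} : x ∈ offPath c J ↔ ∀ j, 2 ≤ j → j < J → c j ≠ x := by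
  simp [offPath]

theorem offPath_two : offPath c 2 = univ := by
  simp [offPath]

theorem offPath_anti {J' : ℕ} (h : J ≤ J') : offPath c J' ⊆ offPath c J :=
  compl_subset_compl.2 (image_subset_image (Ico_subset_Ico_right h))

namespace IsBarePath

theorem root_mem_offPath (hc : IsBarePath T v par c m) (hJ : J ≤ m + 1) : v ∈ offPath c J :=
  mem_offPath.2 fun j _ hj => hc.ne_root j (by omega)

theorem mem_offPath_iff (hc : IsBarePath T v par c m) (hJ : J ≤ m + 1) {j : ℕ} (hj : j ≤ m) :
    c j ∈ offPath c J ↔ j < 2 ∨ J ≤ j := by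
  rw [mem_offPath]
  constructor
  · intro h
    by_contra! hj'
    exact h j hj'.1 hj'.2 rfl
  · intro h i hi hiJ hij
    have := (hc.eq_iff (by omega) hj).1 hij
    omega

theorem pair_subset_erase_offPath (hc : IsBarePath T v par c m) (hm : 0 < m)
    (hJm : J ≤ m + 1) : {c 0, v} ⊆ (offPath c J).erase (c 1) := by
  rw [insert_subset_iff, singleton_subset_iff, mem_erase, mem_erase]
  exact ⟨⟨(hc.eq_iff (by omega) hm).not.2 (by omega),
    (hc.mem_offPath_iff hJm (by omega)).2 (Or.inl two_pos)⟩,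
    (hc.ne_root 1 hm).symm, hc.root_mem_offPath hJm⟩

theorem insert_offPath_succ (hc : IsBarePath T v par c m) (hJ : 2 ≤ J) (hJm : J ≤ m) :
    insert (c J) (offPath c (J + 1)) = offPath c J := by
  ext x
  simp only [mem_insert, mem_offPath]
  constructor
  · rintro (rfl | h) j hj hjJ
    · rw [ne_eq, hc.eq_iff (by omega) hJm]
      omega
    · exact h j hj (by omega)
  · intro h
    by_cases hx : x = c J
    · exact Or.inl hx
    · refine Or.inr fun j hj hjJ => ?_
      rcases Nat.lt_succ_iff_lt_or_eq.1 hjJ with hjJ | rfl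
      · exact h j hj hjJ
      · exact Ne.symm hx

theorem card_offPath (hc : IsBarePath T v par c m) (hJm : J ≤ m + 1) :
    #(offPath c J) = Fintype.card U - (J - 2) := by
  rw [offPath, card_compl, hc.card_image_Ico hJm]

theorem card_erase_offPath (hc : IsBarePath T v par c m) (hJ : 2 ≤ J) (hJm : J ≤ m) :
    #((offPath c (J + 1)).erase (c 1)) = Fintype.card U - J := by
  have hmem := (hc.mem_offPath_iff (J := J + 1) (j := 1) (by omega) (by omega)).2 (by omega)
  rw [card_erase_of_mem hmem, hc.card_offPath (by omega)]
  omega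

theorem par_mem_erase_offPath (hc : IsBarePath T v par c m) (hJ : 1 ≤ J) (hJm : J ≤ m)
    {y : U} (hyv : y ≠ v) (hy : y ∈ (offPath c (J + 1)).erase (c 1)) (hy₀ : y ≠ c 0) :
    par y ∈ (offPath c (J + 1)).erase (c 1) := by
  simp only [mem_erase, mem_offPath] at hy ⊢
  have hne : ∀ j, 1 ≤ j → j ≤ J → c j ≠ par y := by
    intro j hj hjJ hpar
    obtain ⟨j, rfl⟩ := Nat.exists_eq_add_of_le' hj
    have hyj := hc.eq_of_par_eq j (by omega) y hyv hpar.symm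
    rcases Nat.lt_or_ge j 2 with hj2 | hj2
    · interval_cases j
      · exact hy₀ hyj
      · exact hy.1 hyj
    · exact hy.2 j hj2 (by omega) hyj.symm
  exact ⟨(hne 1 le_rfl hJ).symm, fun j hj hjJ => hne j (by omega) (by omega)⟩

theorem neighbor_mem_erase_offPath (hc : IsBarePath T v par c m) (hJ : 1 ≤ J) (hJm : J < m)
    {y : U} (hy : T.Adj v y) : y ∈ (offPath c (J + 1)).erase (c 1) := by
  have hpar : par y = v := by
    rcases (hc.adj_iff v y).1 hy with ⟨-, hpar⟩ | ⟨hv, -⟩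
    · exact hpar
    · exact absurd rfl hv
  have hne : ∀ j < m, c j ≠ y := by
    rintro j hj rfl
    exact hc.ne_root (j + 1) hj (hc.par_eq j hj ▸ hpar)
  exact mem_erase.2 ⟨(hne 1 (by omega)).symm, mem_offPath.2 fun j _ hj => hne j (by omega)⟩

theorem eq_of_adj_of_mem_offPath (hc : IsBarePath T v par c m) (hJ : 2 ≤ J) (hJm : J < m) {w : U}
    (hw : w ∈ offPath c (J + 1)) (hadj : T.Adj w (c J)) : (J = 2 ∧ w = c 1) ∨ w = c (J + 1) := by
  obtain ⟨k, rfl⟩ := Nat.exists_eq_add_of_le' (one_le_two.trans hJ)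
  rcases hc.eq_or_eq_of_adj hJm hadj with rfl | rfl
  · have := (hc.mem_offPath_iff (by omega) (by omega)).1 hw
    obtain rfl : k = 1 := by omega
    exact Or.inl ⟨rfl, rfl⟩
  · exact Or.inr rfl

end IsBarePath

variable [Fintype V] [DecidableEq V] {p : V} {φ : U → V} {P : Position V} {t : ℕ}

theorem PartialCopy.wins_of_relabel (hc : IsBarePath T v par c m) (hJ : 2 ≤ J) (hJm : J ≤ m)
    (h : PartialCopy T v p (offPath c J) φ P.client) (q : ℕ → V) (hq : Set.InjOn q (Set.Ico 2 J))
    (hmem : ∀ j, 2 ≤ j → j < J → q j ∈ unembedded (offPath c J) φ)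
    (hstart : s(φ (c 1), q 2) ∈ P.client)
    (hedge : ∀ j, 2 ≤ j → j < J → s(q j, q (j + 1)) ∈ P.client) (hend : q J = φ (c J)) :
    Wins T v p t P := by
  induction J, hJ using Nat.le_induction generalizing φ with
  | base => exact PartialCopy.wins (offPath_two (c := c) ▸ h)
  | succ J hJ ih =>
    have hnot : c J ∉ offPath c (J + 1) := fun hmem => by
      have := (hc.mem_offPath_iff (by omega) (by omega)).1 hmem
      omega
    have hne : ∀ j ≤ m, j ≠ J → update φ (c J) (q J) (c j) = φ (c j) := fun j hj hjJ =>
      update_of_ne ((hc.eq_iff hj (by omega)).not.2 hjJ) ..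
    have hcopy := h.embed hnot (hmem J hJ J.lt_succ_self) subset_rfl fun w hw hadj => ?_
    · rw [hc.insert_offPath_succ hJ (by omega)] at hcopy
      refine ih (by omega) hcopy (hq.mono (Set.Ico_subset_Ico_right J.le_succ)) ?_ ?_ ?_ ?_
      · intro j hj hjJ
        rw [← hc.insert_offPath_succ hJ (by omega), unembedded_insert_update hnot, mem_erase]
        refine ⟨hq.ne ⟨hj, by omega⟩ ⟨hJ, by omega⟩ hjJ.ne, hmem j hj (by omega)⟩
      · rwa [hne 1 (by omega) (by omega)]
      · exact fun j hj hjJ => hedge j hj (by omega)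
      · rw [update_self]
    · rcases hc.eq_of_adj_of_mem_offPath hJ (by omega) hw hadj with ⟨rfl, rfl⟩ | rfl
      · exact hstart
      · rw [Sym2.eq_swap, ← hend]
        exact hedge J hJ J.lt_succ_self

end BarePath

section Reroute

variable {U V : Type*} [Fintype U] [DecidableEq U] {T : SimpleGraph U} {v : U} {p : V}
  {par : U → U} {c : ℕ → U} {m : ℕ} {φ : U → V}

theorem PartialCopy.path_edge_mem {J j : ℕ} {C : Finset (Sym2 V)}
    (h : PartialCopy T v p (offPath c J) φ C) (hc : IsBarePath T v par c m) (hJ : J ≤ m + 1)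
    (hj : J ≤ j) (hjm : j < m) : s(φ (c j), φ (c (j + 1))) ∈ C :=
  h.edge_mem _ ((hc.mem_offPath_iff hJ hjm.le).2 (Or.inr hj)) _
    ((hc.mem_offPath_iff hJ hjm).2 (Or.inr (by omega))) (hc.adj_succ hjm)

theorem PartialCopy.path_ne {i j J : ℕ} {C : Finset (Sym2 V)}
    (h : PartialCopy T v p (offPath c J) φ C) (hc : IsBarePath T v par c m) (hJ : J ≤ m + 1)
    (hi : i ≤ m) (hj : j ≤ m) (hi' : i < 2 ∨ J ≤ i) (hj' : j < 2 ∨ J ≤ j) (hij : i ≠ j) :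
    φ (c i) ≠ φ (c j) :=
  h.injOn.ne ((hc.mem_offPath_iff hJ hi).2 hi') ((hc.mem_offPath_iff hJ hj).2 hj')
    ((hc.eq_iff hi hj).not.2 hij)

theorem PartialCopy.root_ne {j J : ℕ} {C : Finset (Sym2 V)}
    (h : PartialCopy T v p (offPath c J) φ C) (hc : IsBarePath T v par c m) (hJ : J ≤ m + 1)
    (hj : j ≤ m) (hj' : j < 2 ∨ J ≤ j) : p ≠ φ (c j) := by
  rw [← h.map_root]
  exact h.injOn.ne h.root_mem ((hc.mem_offPath_iff hJ hj).2 hj') (hc.ne_root j hj).symm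

variable [Fintype V] [DecidableEq V] {P : Position V} {t : ℕ} {u : V} {i j k J : ℕ}

namespace PartialCopy

theorem wins_of_rearrange (h : PartialCopy T v p (offPath c 3) φ P.client)
    (hc : IsBarePath T v par c m) (hu : u ∈ unembedded (offPath c 3) φ) (hJ : 3 ≤ J) (hJm : J ≤ m)
    (f : ℕ → ℕ) (hinj : Set.InjOn f (Set.Ico 2 J))
    (hmaps : Set.MapsTo f (Set.Ico 2 J) (Set.Ico 2 J)) (hfJ : f J = J)
    (hstart : s(φ (c 1), update (φ ∘ c) 2 u (f 2)) ∈ P.client)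
    (hedge : ∀ j, 2 ≤ j → j < J →
      s(update (φ ∘ c) 2 u (f j), update (φ ∘ c) 2 u (f (j + 1))) ∈ P.client) :
    Wins T v p t P := by
  have hoff : ∀ j, 3 ≤ j → j ≤ m → c j ∈ offPath c 3 := fun j hj hjm =>
    (hc.mem_offPath_iff (by omega) hjm).2 (Or.inr hj)
  have hinj' : Set.InjOn (update (φ ∘ c) 2 u) (Set.Ico 2 J) := by
    intro i hi j hj hij
    simp only [Set.mem_Ico] at hi hj
    rw [mem_unembedded] at hu
    simp only [update_apply, comp_apply] at hij
    split_ifs at hij with h₁ h₂ h₂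
    · omega
    · exact absurd hij.symm (hu _ (hoff j (by omega) (by omega)))
    · exact absurd hij (hu _ (hoff i (by omega) (by omega)))
    · exact (hc.eq_iff (by omega) (by omega)).1
        (h.injOn (hoff i (by omega) (by omega)) (hoff j (by omega) (by omega)) hij)
  refine (h.mono (hc.root_mem_offPath (by omega)) (offPath_anti hJ) subset_rfl).wins_of_relabel hc
    (by omega) hJm (update (φ ∘ c) 2 u ∘ f) (hinj'.comp hinj hmaps) ?_ hstart hedge ?_
  · intro j hj hjJ
    obtain ⟨h₁, h₂⟩ := hmaps (Set.mem_Ico.2 ⟨hj, hjJ⟩)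
    rw [mem_unembedded]
    intro x hx
    rcases h₁.eq_or_lt with h₁ | h₁
    · rw [comp_apply, ← h₁, update_self]
      exact mem_unembedded.1 hu x (offPath_anti hJ hx)
    · rw [comp_apply, update_of_ne h₁.ne', comp_apply]
      exact h.injOn.ne (offPath_anti hJ hx) (hoff _ h₁ (by omega))
        (mem_offPath.1 hx _ h₁.le h₂).symm
  · rw [comp_apply, hfJ, update_of_ne (by omega), comp_apply]

theorem wins_of_reroute_reversed (h : PartialCopy T v p (offPath c 3) φ P.client)
    (hc : IsBarePath T v par c m) (hu : u ∈ unembedded (offPath c 3) φ) (hi : 3 ≤ i) (him : i < m)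
    (hstart : s(φ (c 1), φ (c i)) ∈ P.client) (hu_start : s(u, φ (c 3)) ∈ P.client)
    (hu_end : s(u, φ (c (i + 1))) ∈ P.client) : Wins T v p t P := by
  refine h.wins_of_rearrange hc hu (J := i + 1) (by omega) him
    (fun j => if j ≤ i then i + 2 - j else j) ?_ ?_ (by simp) ?_ ?_
  · intro j hj k hk hjk
    simp only [Set.mem_Ico] at hj hk
    grind
  · intro j hj
    simp only [Set.mem_Ico] at hj ⊢
    grind
  · simpa [show 2 ≤ i by omega, show i ≠ 2 by omega] using hstart
  · intro j hj hji
    rcases (Nat.lt_succ_iff.1 hji).eq_or_lt with rfl | hji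
    · simpa [show j + 1 ≠ 2 by omega] using hu_end
    · rcases (Nat.succ_le_iff.2 hji).eq_or_lt with rfl | hji'
      · simpa [Sym2.eq_swap, show j + 1 + 2 - j = 3 by omega] using hu_start
      · have hedge := h.path_edge_mem hc (by omega) (show 3 ≤ i + 1 - j by omega) (by omega)
        rw [Sym2.eq_swap] at hedge
        simpa [show j ≤ i by omega, show j + 1 ≤ i by omega, show i + 1 - j + 1 ≠ 2 by omega,
          show i + 1 - j ≠ 2 by omega, show i + 2 - j = i + 1 - j + 1 by omega,
          show i + 2 - (j + 1) = i + 1 - j by omega] using hedge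

theorem wins_of_insert (h : PartialCopy T v p (offPath c 3) φ P.client)
    (hc : IsBarePath T v par c m) (hu : u ∈ unembedded (offPath c 3) φ) (hk : 3 ≤ k) (hkm : k < m)
    (hstart : s(φ (c 1), φ (c 3)) ∈ P.client) (hu_left : s(u, φ (c k)) ∈ P.client)
    (hu_right : s(u, φ (c (k + 1))) ∈ P.client) : Wins T v p t P := by
  refine h.wins_of_rearrange hc hu (J := k + 1) (by omega) hkm
    (fun j => if j < k then j + 1 else if j = k then 2 else j) ?_ ?_ (by simp) ?_ ?_
  · intro i hi j hj hij
    simp only [Set.mem_Ico] at hi hj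
    grind
  · intro j hj
    simp only [Set.mem_Ico] at hj ⊢
    grind
  · simpa [show 2 < k by omega] using hstart
  · intro j hj hjk
    rcases (Nat.lt_succ_iff.1 hjk).eq_or_lt with rfl | hjk
    · simpa [show j + 1 ≠ 2 by omega] using hu_right
    · rcases (Nat.succ_le_iff.2 hjk).eq_or_lt with rfl | hjk'
      · simpa [Sym2.eq_swap, show j + 1 ≠ 2 by omega] using hu_left
      · simpa [hjk, show j + 1 < k by omega, show j + 1 ≠ 2 by omega,
          show j + 1 + 1 ≠ 2 by omega] using
          h.path_edge_mem hc (by omega) (show 3 ≤ j + 1 by omega) (by omega)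

theorem wins_of_fill (h : PartialCopy T v p (offPath c 3) φ P.client)
    (hc : IsBarePath T v par c m) (hu : u ∈ unembedded (offPath c 3) φ) (hm : 3 ≤ m)
    (hu_left : s(φ (c 1), u) ∈ P.client) (hu_right : s(u, φ (c 3)) ∈ P.client) :
    Wins T v p t P :=
  h.wins_of_rearrange hc hu le_rfl hm id (Set.injOn_id _) (Set.mapsTo_id _) rfl
    (by simpa using hu_left) fun j hj hj3 => by
      obtain rfl : j = 2 := by omega
      simpa using hu_right

theorem wins_one_of_left (h : PartialCopy T v p (offPath c 3) φ P.client)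
    (hc : IsBarePath T v par c m) (hu : u ∈ unembedded (offPath c 3) φ) (hi : 3 ≤ i)
    (him : i < m) (hu_left : s(u, φ (c 3)) ∈ P.client) (hu_right : s(u, φ (c (i + 1))) ∈ P.client)
    (h₁u : P.Free s(φ (c 1), u)) (h₁ᵢ : P.Free s(φ (c 1), φ (c i))) : Wins T v p 1 P := by
  have hu' := mem_unembedded.1 hu
  have hcopy : ∀ {e f}, PartialCopy T v p (offPath c 3) φ (P.claim e f).client := fun {_ _} =>
    h.mono h.root_mem subset_rfl (subset_insert ..)
  refine .star (hu' _ ((hc.mem_offPath_iff (by omega) him.le).2 (Or.inr hi))).symm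
    (h.map_root ▸ hu' v h.root_mem) (h.root_ne hc (by omega) him.le (Or.inr hi)) h₁u h₁ᵢ
    (hcopy.wins_of_fill hc hu (by omega) ?_ ?_)
    (hcopy.wins_of_reroute_reversed hc hu hi him ?_ ?_ ?_)
  all_goals simp [Position.claim, hu_left, hu_right]

theorem wins_one_of_start (h : PartialCopy T v p (offPath c 3) φ P.client)
    (hc : IsBarePath T v par c m) (hu : u ∈ unembedded (offPath c 3) φ) (hi : 3 ≤ i)
    (him : i + 2 ≤ m) (hstart : s(φ (c 1), φ (c 3)) ∈ P.client)
    (hu_mid : s(u, φ (c (i + 1))) ∈ P.client) (hui : P.Free s(u, φ (c i)))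
    (hui' : P.Free s(u, φ (c (i + 2)))) : Wins T v p 1 P := by
  have hcopy : ∀ {e f}, PartialCopy T v p (offPath c 3) φ (P.claim e f).client := fun {_ _} =>
    h.mono h.root_mem subset_rfl (subset_insert ..)
  refine .star (h.path_ne hc (by omega) (by omega) him (Or.inr hi) (Or.inr (by omega)) (by omega))
    (h.root_ne hc (by omega) (by omega) (Or.inr hi))
    (h.root_ne hc (by omega) him (Or.inr (by omega))) hui hui'
    (hcopy.wins_of_insert hc hu hi (by omega) ?_ ?_ ?_)
    (hcopy.wins_of_insert hc hu (k := i + 1) (by omega) (by omega) ?_ ?_ ?_)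
  all_goals simp [Position.claim, hstart, hu_mid]

theorem wins_two (h : PartialCopy T v p (offPath c 3) φ P.client)
    (hc : IsBarePath T v par c m) (hu : u ∈ unembedded (offPath c 3) φ) (hi : 4 ≤ i)
    (him : i + 2 ≤ m) (hu_mid : s(u, φ (c (i + 1))) ∈ P.client) (h₁u : P.Free s(φ (c 1), u))
    (h₃u : P.Free s(φ (c 3), u)) (h₁₃ : P.Free s(φ (c 1), φ (c 3)))
    (h₁ᵢ : P.Free s(φ (c 1), φ (c i))) (hui : P.Free s(u, φ (c i)))
    (hui' : P.Free s(u, φ (c (i + 2)))) : Wins T v p 2 P := by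
  have hu' := mem_unembedded.1 hu
  have hu₃ := hu' _ ((hc.mem_offPath_iff (j := 3) (by omega) (by omega)).2 (by omega))
  have hu₁ := hu' _ ((hc.mem_offPath_iff (j := 1) (by omega) (by omega)).2 (by omega))
  have hne : ∀ j ≤ m, j ≠ 3 → (j < 2 ∨ 3 ≤ j) → φ (c 3) ≠ φ (c j) := fun j hj hj3 hj' =>
    h.path_ne hc (by omega) (by omega) hj (by omega) hj' hj3.symm
  have hcopy : ∀ {e f}, PartialCopy T v p (offPath c 3) φ (P.claim e f).client := fun {_ _} =>
    h.mono h.root_mem subset_rfl (subset_insert ..)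
  refine .star (x := φ (c 3)) hu₁.symm (h.map_root ▸ hu' v h.root_mem)
    (h.root_ne hc (by omega) (by omega) (by omega)) h₃u (Sym2.eq_swap ▸ h₁₃)
    (hcopy.wins_one_of_left hc hu (i := i) (by omega) (by omega) ?_ ?_
      (h₁u.claim_star ?_) (h₁ᵢ.claim_star ?_))
    (hcopy.wins_one_of_start hc hu (i := i) (by omega) him ?_ ?_
      (hui.claim_star ?_) (hui'.claim_star ?_))
  all_goals simp (disch := omega) [Position.claim, Sym2.eq_swap, hu_mid, hu₃, hne]

end PartialCopy

end Reroute

section PathState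

variable {U V : Type*}

/-- Edges still available for routing the path through the unembedded vertex `a` near `c (i + 1)`,
either inserting `a` next to `c (i + 1)` or jumping from `c 1` to `c i` and back through `a`. -/
structure IsDetour (c : ℕ → U) (φ : U → V) (P : Position V) (a : V) (i : ℕ) : Prop where
  free_left : P.Free s(a, φ (c i))
  free_mid : P.Free s(a, φ (c (i + 1)))
  free_right : P.Free s(a, φ (c (i + 2)))
  free_start : P.Free s(φ (c 1), φ (c i))

theorem IsDetour.congr {c : ℕ → U} {φ φ' : U → V} {P : Position V} {u : V} {i : ℕ}
    (h₁ : φ' (c 1) = φ (c 1)) (hφ : ∀ j, i ≤ j → j ≤ i + 2 → φ' (c j) = φ (c j))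
    (h : IsDetour c φ P u i) : IsDetour c φ' P u i where
  free_left := hφ i le_rfl (by omega) ▸ h.free_left
  free_mid := hφ (i + 1) (by omega) (by omega) ▸ h.free_mid
  free_right := hφ (i + 2) (by omega) le_rfl ▸ h.free_right
  free_start := h₁ ▸ hφ i le_rfl (by omega) ▸ h.free_start

variable [DecidableEq V]

theorem IsDetour.claim_star {c : ℕ → U} {φ : U → V} {P : Position V} {u x a b : V} {i : ℕ}
    (h : IsDetour c φ P u i) (hxu : x ≠ u) (hx : x ≠ φ (c 1))
    (hxc : ∀ j, i ≤ j → j ≤ i + 2 → x ≠ φ (c j)) : IsDetour c φ (P.claim s(x, a) s(x, b)) u i where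
  free_left := h.free_left.claim_star (by simp [hxu, hxc])
  free_mid := h.free_mid.claim_star (by simp [hxu, hxc])
  free_right := h.free_right.claim_star (by simp [hxu, hxc])
  free_start := h.free_start.claim_star (by simp [hx, hxc])

variable [Fintype U] [DecidableEq U] [Fintype V]

/-- The invariant of the last `J` rounds: only `c 2, …, c (J - 1)` are left to embed, and each
unembedded vertex has two detours beyond position `J₀` of the path. -/
structure PathState (T : SimpleGraph U) (v : U) (p : V) (c : ℕ → U) (m J₀ J : ℕ) (φ : U → V)
    (P : Position V) : Prop extends PartialCopy T v p (offPath c J) φ P.client where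
  free_unembedded : ∀ a ∈ unembedded (offPath c J) φ, ∀ b ∈ unembedded (offPath c J) φ,
    a ≠ b → P.Free s(a, b)
  free_start : ∀ a ∈ unembedded (offPath c J) φ, P.Free s(φ (c 1), a)
  free_end : ∀ a ∈ unembedded (offPath c J) φ, P.Free s(φ (c J), a)
  free_start_end : P.Free s(φ (c 1), φ (c J))
  exists_detours : ∀ a ∈ unembedded (offPath c J) φ, ∃ i k, J₀ < i ∧ i + 2 ≤ k ∧ k + 2 ≤ m ∧
    IsDetour c φ P a i ∧ IsDetour c φ P a k

variable {T : SimpleGraph U} {v : U} {p : V} {par : U → U} {c : ℕ → U} {m J₀ J : ℕ}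
  {φ : U → V} {P : Position V}

theorem IsBarePath.le_card_unembedded (hc : IsBarePath T v par c m) (hJm : J ≤ m + 1)
    (hUV : Fintype.card U ≤ Fintype.card V) : J - 2 ≤ #(unembedded (offPath c J) φ) := by
  have hpath := card_le_univ ((Ico 2 J).image c)
  rw [hc.card_image_Ico hJm] at hpath
  have himage : #((offPath c J).image φ) ≤ #(offPath c J) := card_image_le
  rw [hc.card_offPath hJm] at himage
  rw [unembedded, card_compl]
  omega

namespace PathState

theorem wins_two_of_isDetour (h : PathState T v p c m J₀ 3 φ P) (hc : IsBarePath T v par c m)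
    {u : V} (hu : u ∈ unembedded (offPath c 3) φ) {i k : ℕ} (hi : 4 ≤ i) (him : i + 2 ≤ m)
    (hk : 4 ≤ k) (hkm : k + 2 ≤ m) (hik : i + 2 ≤ k ∨ k + 2 ≤ i) (hdetour : IsDetour c φ P u i) :
    Wins T v p 2 (P.claim s(u, φ (c (i + 1))) s(u, φ (c (k + 1)))) := by
  have hne : ∀ j l, j ≤ m → l ≤ m → (j < 2 ∨ 3 ≤ j) → (l < 2 ∨ 3 ≤ l) → j ≠ l →
      φ (c j) ≠ φ (c l) := fun j l => h.path_ne hc (by omega)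
  have hu' : ∀ j ≤ m, (j < 2 ∨ 3 ≤ j) → φ (c j) ≠ u := fun j hj hj' =>
    mem_unembedded.1 hu _ ((hc.mem_offPath_iff (by omega) hj).2 hj')
  have hcopy : PartialCopy T v p (offPath c 3) φ
      (P.claim s(u, φ (c (i + 1))) s(u, φ (c (k + 1)))).client :=
    h.toPartialCopy.mono h.root_mem subset_rfl (subset_insert ..)
  refine hcopy.wins_two hc hu (i := i) hi him (mem_insert_self ..)
    ((h.free_start u hu).claim_star ?_) ((h.free_end u hu).claim_star ?_)
    (h.free_start_end.claim_star ?_) (hdetour.free_start.claim_star ?_)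
    (hdetour.free_left.claim_star ?_) (hdetour.free_right.claim_star ?_)
  all_goals
    simp only [Sym2.mem_iff, not_or]
    grind

theorem wins_three (h : PathState T v p c m J₀ 3 φ P) (hc : IsBarePath T v par c m)
    (hJ₀ : 3 ≤ J₀) {u : V} (hu : u ∈ unembedded (offPath c 3) φ) : Wins T v p 3 P := by
  obtain ⟨i, k, hi, hik, hkm, hdi, hdk⟩ := h.exists_detours u hu
  exact .star
    (h.path_ne hc (by omega) (by omega) (by omega) (by omega) (by omega) (by omega))
    (h.root_ne hc (by omega) (by omega) (by omega)) (h.root_ne hc (by omega) (by omega) (by omega))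
    hdi.free_mid hdk.free_mid
    (h.wins_two_of_isDetour hc hu (by omega) (by omega) (by omega) hkm (by omega) hdi)
    (h.wins_two_of_isDetour hc hu (by omega) hkm (by omega) (by omega) (by omega) hdk)

theorem isDetour_embed (h : PathState T v p c m J₀ (J + 1) φ P) (hc : IsBarePath T v par c m)
    (hJ : 3 ≤ J) (hJ₀ : J < J₀) (hJm : J < m) {x : V} (hx : x ∈ unembedded (offPath c (J + 1)) φ)
    {i : ℕ} (hi : J₀ < i) (him : i + 2 ≤ m) (hdetour : IsDetour c φ P x i) (a b : V) :
    IsDetour c (update φ (c J) a) (P.claim s(φ (c (J + 1)), a) s(φ (c (J + 1)), b)) x i := by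
  have hup : ∀ j ≤ m, j ≠ J → update φ (c J) a (c j) = φ (c j) := fun j hj hjJ =>
    update_of_ne ((hc.eq_iff hj (by omega)).not.2 hjJ) ..
  have hne : ∀ j ≤ m, (j < 2 ∨ J + 1 ≤ j) → j ≠ J + 1 → φ (c (J + 1)) ≠ φ (c j) :=
    fun j hj hjJ hne => h.path_ne hc (by omega) hJm hj (.inr le_rfl) hjJ hne.symm
  exact .congr (hup 1 (by omega) (by omega)) (fun j hj hji => hup j (by omega) (by omega)) <|
    hdetour.claim_star (mem_unembedded.1 hx _ ((hc.mem_offPath_iff (by omega) hJm).2 (.inr le_rfl)))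
      (hne 1 (by omega) (by omega) (by omega)) fun j hj hji =>
        hne j (by omega) (by omega) (by omega)

theorem embed (h : PathState T v p c m J₀ (J + 1) φ P) (hc : IsBarePath T v par c m)
    (hJ : 3 ≤ J) (hJ₀ : J < J₀) (hJm : J < m) {a b : V} (ha : a ∈ unembedded (offPath c (J + 1)) φ)
    (hb : b ∈ unembedded (offPath c (J + 1)) φ) :
    PathState T v p c m J₀ J (update φ (c J) a)
      (P.claim s(φ (c (J + 1)), a) s(φ (c (J + 1)), b)) := by
  have hJ_notMem : c J ∉ offPath c (J + 1) := fun hmem => by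
    have := (hc.mem_offPath_iff (by omega) (by omega)).1 hmem
    omega
  have hinsert : insert (c J) (offPath c (J + 1)) = offPath c J :=
    hc.insert_offPath_succ (by omega) (by omega)
  have hunemb := unembedded_insert_update (φ := φ) (a := a) hJ_notMem
  rw [hinsert] at hunemb
  have hup : ∀ j ≤ m, j ≠ J → update φ (c J) a (c j) = φ (c j) := fun j hj hjJ =>
    update_of_ne ((hc.eq_iff hj (by omega)).not.2 hjJ) ..
  have hcentre : ∀ d ∈ unembedded (offPath c (J + 1)) φ, φ (c (J + 1)) ≠ d := fun d hd =>
    mem_unembedded.1 hd _ ((hc.mem_offPath_iff (by omega) hJm).2 (Or.inr le_rfl))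
  have h₁ : φ (c (J + 1)) ≠ φ (c 1) := h.path_ne hc (by omega) (by omega) (by omega) (by omega)
    (by omega) (by omega)
  have hcopy := h.toPartialCopy.embed hJ_notMem ha
    (subset_insert s(φ (c (J + 1)), a) P.client) fun w hw hwJ => ?_
  · rw [hinsert] at hcopy
    refine ⟨hcopy, ?_, ?_, ?_, ?_, ?_⟩ <;> simp only [hunemb, mem_erase, update_self]
    · intro x ⟨_, hx⟩ y ⟨_, hy⟩ hxy
      exact (h.free_unembedded x hx y hy hxy).claim_star (by simp [*])
    · intro x ⟨_, hx⟩
      rw [hup 1 (by omega) (by omega)]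
      exact (h.free_start x hx).claim_star (by simp [*])
    · intro x ⟨hxa, hx⟩
      exact (h.free_unembedded a ha x hx hxa.symm).claim_star (by simp [*])
    · rw [hup 1 (by omega) (by omega)]
      exact (h.free_start a ha).claim_star (by simp [*])
    · intro x ⟨_, hx⟩
      obtain ⟨i, k, hi, hik, hkm, hdi, hdk⟩ := h.exists_detours x hx
      exact ⟨i, k, hi, hik, hkm, h.isDetour_embed hc hJ hJ₀ hJm hx hi (by omega) hdi a b,
        h.isDetour_embed hc hJ hJ₀ hJm hx (by omega) hkm hdk a b⟩
  · rcases hc.eq_of_adj_of_mem_offPath (by omega) hJm hw hwJ with ⟨rfl, -⟩ | rfl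
    · omega
    · exact mem_insert_self ..

theorem wins (hc : IsBarePath T v par c m) (hUV : Fintype.card U ≤ Fintype.card V) (hJ : 3 ≤ J)
    (hJ₀ : J ≤ J₀) (hJm : J ≤ m) (h : PathState T v p c m J₀ J φ P) : Wins T v p J P := by
  have hcard := hc.le_card_unembedded (J := J) (φ := φ) (by omega) hUV
  induction J, hJ using Nat.le_induction generalizing φ P with
  | base =>
    obtain ⟨u, hu⟩ := card_pos.1 (Nat.lt_of_lt_of_le Nat.one_pos hcard)
    exact h.wins_three hc hJ₀ hu
  | succ J hJ ih =>
    obtain ⟨a, ha, b, hb, hab⟩ := one_lt_card.1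
      (Nat.lt_of_lt_of_le (show 1 < J + 1 - 2 by omega) hcard)
    have hroot : ∀ d ∈ unembedded (offPath c (J + 1)) φ, p ≠ d := fun d hd =>
      h.map_root ▸ mem_unembedded.1 hd v h.root_mem
    have hnext : ∀ d ∈ unembedded (offPath c (J + 1)) φ,
        ∀ d' ∈ unembedded (offPath c (J + 1)) φ,
        Wins T v p J (P.claim s(φ (c (J + 1)), d) s(φ (c (J + 1)), d')) := fun d hd d' hd' =>
      ih (by omega) (by omega) (h.embed hc hJ hJ₀ hJm hd hd')
        (hc.le_card_unembedded (by omega) hUV)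
    exact .star hab (hroot a ha) (hroot b hb) (h.free_end a ha) (h.free_end b hb)
      (hnext a ha b hb) (hnext b hb a ha)

end PathState

end PathState

section BarePathGame

variable {U V : Type*} [Fintype U] [DecidableEq U] [Fintype V] [DecidableEq V]
  {T : SimpleGraph U} [DecidableRel T.Adj] {v : U} {p : V} {D d : ℕ} {par : U → U} {c : ℕ → U}
  {m J t : ℕ} {φ : U → V} {P : Position V}

theorem exists_add_two_le_of_two_lt_card {A : Finset ℕ} (hA : 2 < #A) :
    ∃ i ∈ A, ∃ k ∈ A, i + 2 ≤ k := by
  have hne : A.Nonempty := card_pos.1 (by omega)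
  refine ⟨A.min' hne, A.min'_mem hne, A.max' hne, A.max'_mem hne, ?_⟩
  have := card_le_card (show A ⊆ Icc (A.min' hne) (A.max' hne) from fun i hi =>
    mem_Icc.2 ⟨A.min'_le i hi, A.le_max' i hi⟩)
  rw [Nat.card_Icc] at this
  omega

namespace GreedyState

theorem card_path_waiter_le {K : Finset ℕ} {e : ℕ} (h : GreedyState T v p D (offPath c J) φ P)
    (hc : IsBarePath T v par c m) (hJ : J ≤ m + 1) (r : ℕ) {a : V} (ha : P.waiterDegree a ≤ e)
    (hK : ∀ i ∈ K, J ≤ i + r ∧ i + r ≤ m) :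
    #{i ∈ K | s(a, φ (c (i + r))) ∈ P.waiter} ≤ e := by
  refine (Position.card_filter_le_waiterDegree (fun i hi k hk hik => ?_) a).trans ha
  have hi' := hK i hi
  have hk' := hK k hk
  by_contra hne
  exact h.path_ne hc hJ hi'.2 hk'.2 (Or.inr hi'.1) (Or.inr hk'.1) (by omega) hik

theorem isDetour (h : GreedyState T v p D (offPath c J) φ P) (hc : IsBarePath T v par c m)
    (hJ : 3 ≤ J) {a : V} (ha : a ∈ unembedded (offPath c J) φ) {i : ℕ} (hi : J ≤ i)
    (him : i + 2 ≤ m) (hW : ∀ r ≤ 2, s(a, φ (c (i + r))) ∉ P.waiter)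
    (hW_start : s(φ (c 1), φ (c i)) ∉ P.waiter) : IsDetour c φ P a i := by
  have hmem : ∀ j ≤ m, (j < 2 ∨ J ≤ j) → c j ∈ offPath c J := fun j hj hj' =>
    (hc.mem_offPath_iff (by omega) hj).2 hj'
  have hfree : ∀ r ≤ 2, P.Free s(a, φ (c (i + r))) := fun r hr => by
    have := hW r hr
    rw [Sym2.eq_swap] at this ⊢
    exact h.free_of_notMem_waiter (hmem _ (by omega) (by omega)) ha this
  refine ⟨hfree 0 (by omega), hfree 1 (by omega), hfree 2 le_rfl, ?_, fun hclient => ?_, hW_start⟩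
  · exact h.path_ne hc (by omega) (by omega) (by omega) (by omega) (by omega) (by omega)
  · have hadj := h.adj_of_mem_client (hmem 1 (by omega) (by omega))
      (hmem i (by omega) (by omega)) hclient
    rcases hc.eq_or_eq_of_adj (j := 0) (by omega) hadj.symm with heq | heq <;>
    · rw [hc.eq_iff (by omega) (by omega)] at heq
      omega

open Classical in
theorem card_not_isDetour_le (h : GreedyState T v p D (offPath c J) φ P)
    (hc : IsBarePath T v par c m) (hJ : 3 ≤ J) (hJm : J ≤ m)
    (hdeg : ∀ x, x ≠ v → T.degree x ≤ d) {a : V} (ha : a ∈ unembedded (offPath c J) φ) :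
    #{i ∈ Ioc J (m - 2) | ¬ IsDetour c φ P a i} ≤ 3 * D + (D + d) := by
  have hbad : ∀ r ∈ range 3, #{i ∈ Ioc J (m - 2) | s(a, φ (c (i + r))) ∈ P.waiter} ≤ D :=
    fun r hr => h.card_path_waiter_le hc (by omega) r (h.waiterDegree_le_of_mem_unembedded ha)
      fun i hi => by
        rw [mem_Ioc] at hi
        rw [mem_range] at hr
        omega
  have hstart : P.waiterDegree (φ (c 1)) ≤ D + d :=
    (h.waiterDegree_le _ ((hc.mem_offPath_iff (by omega) (by omega)).2 (by omega))).trans <|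
      Nat.add_le_add_left ((card_filter_adj_le_degree _ _).trans
        (hdeg _ (hc.ne_root 1 (by omega)))) D
  have hbad_start : #{i ∈ Ioc J (m - 2) | s(φ (c 1), φ (c (i + 0))) ∈ P.waiter} ≤ D + d :=
    h.card_path_waiter_le hc (by omega) 0 hstart fun i hi => by
      rw [mem_Ioc] at hi
      omega
  have hsub : {i ∈ Ioc J (m - 2) | ¬ IsDetour c φ P a i} ⊆
      ((range 3).biUnion fun r => {i ∈ Ioc J (m - 2) | s(a, φ (c (i + r))) ∈ P.waiter}) ∪
        {i ∈ Ioc J (m - 2) | s(φ (c 1), φ (c (i + 0))) ∈ P.waiter} := by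
    intro i hi
    obtain ⟨hi, hnot⟩ := mem_filter.1 hi
    have hi' := mem_Ioc.1 hi
    by_contra hgood
    simp only [mem_union, mem_biUnion, mem_filter, hi, true_and, mem_range, not_or,
      not_exists, not_and] at hgood
    exact hnot <| h.isDetour hc hJ ha hi'.1.le (by omega)
      (fun r hr => hgood.1 r (by omega)) hgood.2
  calc #{i ∈ Ioc J (m - 2) | ¬ IsDetour c φ P a i} ≤ _ := card_le_card hsub
    _ ≤ _ := card_union_le _ _
    _ ≤ 3 * D + (D + d) :=
      Nat.add_le_add (by simpa using card_biUnion_le_card_mul _ _ D hbad) hbad_start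

theorem exists_detours (h : GreedyState T v p D (offPath c J) φ P) (hc : IsBarePath T v par c m)
    (hJ : 3 ≤ J) (hdeg : ∀ x, x ≠ v → T.degree x ≤ d) (hm : 4 * D + d + 5 + J ≤ m) {a : V}
    (ha : a ∈ unembedded (offPath c J) φ) :
    ∃ i k, J < i ∧ i + 2 ≤ k ∧ k + 2 ≤ m ∧ IsDetour c φ P a i ∧ IsDetour c φ P a k := by
  classical
  have hbad := h.card_not_isDetour_le hc hJ (by omega) hdeg ha
  have hsplit := card_filter_add_card_filter_not (s := Ioc J (m - 2)) (IsDetour c φ P a)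
  rw [Nat.card_Ioc] at hsplit
  obtain ⟨i, hi, k, hk, hik⟩ := exists_add_two_le_of_two_lt_card
    (A := (Ioc J (m - 2)).filter (IsDetour c φ P a)) (by omega)
  simp only [mem_filter, mem_Ioc] at hi hk
  exact ⟨i, k, hi.1.1, hik, by omega, hi.2, hk.2⟩

theorem pathState (h : GreedyState T v p D (offPath c J) φ P) (hc : IsBarePath T v par c m)
    (hJ : 3 ≤ J) (hdeg : ∀ x, x ≠ v → T.degree x ≤ d) (hm : 4 * D + d + 5 + J ≤ m)
    (hstart : ∀ a ∈ unembedded (offPath c J) φ, P.Free s(φ (c 1), a))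
    (hend : ∀ a ∈ unembedded (offPath c J) φ, P.Free s(φ (c J), a))
    (hstart_end : P.Free s(φ (c 1), φ (c J))) : PathState T v p c m J J φ P where
  toPartialCopy := h.toPartialCopy
  free_unembedded _ ha _ hb := h.free_of_mem_unembedded ha hb
  free_start := hstart
  free_end := hend
  free_start_end := hstart_end
  exists_detours _ ha := h.exists_detours hc hJ hdeg hm ha

theorem wins_of_embed_path_start (hc : IsBarePath T v par c m) (hJ : 3 ≤ J) (hJm : J < m)
    (hdeg : ∀ x, x ≠ v → T.degree x ≤ d)
    (hcard : 2 * D + 2 + d + #((offPath c (J + 1)).erase (c 1)) ≤ Fintype.card V)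
    (hnext : ∀ φ P, GreedyState T v p D (offPath c (J + 1)) φ P →
      (∀ a ∈ unembedded (offPath c (J + 1)) φ, P.Free s(φ (c 1), a)) → Wins T v p t P)
    (h : GreedyState T v p D ((offPath c (J + 1)).erase (c 1)) φ P) : Wins T v p (t + 1) P := by
  have hmem : ∀ j ≤ m, (j < 2 ∨ J + 1 ≤ j) → c j ∈ offPath c (J + 1) := fun j hj =>
    (hc.mem_offPath_iff (by omega) hj).2
  have h₀ : c 0 ∈ (offPath c (J + 1)).erase (c 1) := mem_erase.2
    ⟨(hc.eq_iff (by omega) (by omega)).not.2 (by omega), hmem 0 (by omega) (by omega)⟩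
  have h₁ := notMem_erase (c 1) (offPath c (J + 1))
  have hadj : ∀ w ∈ (offPath c (J + 1)).erase (c 1), T.Adj w (c 1) ↔ w = c 0 := by
    refine fun w hw => ⟨fun hw1 => ?_, fun hw => hw ▸ hc.adj_succ (by omega)⟩
    refine (hc.eq_or_eq_of_adj (by omega) hw1).resolve_right ?_
    rintro rfl
    have := (hc.mem_offPath_iff (by omega) (by omega)).1 (mem_of_mem_erase hw)
    omega
  have hdeg₀ := (card_filter_adj_le_degree ((offPath c (J + 1)).erase (c 1)) (c 0)).trans
    (hdeg _ (hc.ne_root 0 (by omega)))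
  refine h.wins_succ_of_embed h₀ h₁ hadj (by omega) fun a b _ ha _ hstate => ?_
  have hfree := h.free_of_embed_claim (b := b) h₀ h₁ ha
  rw [insert_erase (hmem 1 (by omega) (by omega))] at hstate hfree
  exact hnext _ _ hstate hfree

theorem wins_of_embed_path_end (hc : IsBarePath T v par c m) (hUV : Fintype.card U ≤ Fintype.card V)
    (hJ : 3 ≤ J) (hdeg : ∀ x, x ≠ v → T.degree x ≤ d) (hm : 4 * D + d + 5 + J ≤ m)
    (hcard : 2 * D + 2 + d + #(offPath c (J + 1)) ≤ Fintype.card V)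
    (h : GreedyState T v p D (offPath c (J + 1)) φ P)
    (hstart : ∀ a ∈ unembedded (offPath c (J + 1)) φ, P.Free s(φ (c 1), a)) :
    Wins T v p (J + 1) P := by
  have hJ_notMem : c J ∉ offPath c (J + 1) := fun hmem => by
    have := (hc.mem_offPath_iff (by omega) (by omega)).1 hmem
    omega
  have hJ_succ : c (J + 1) ∈ offPath c (J + 1) :=
    (hc.mem_offPath_iff (by omega) (by omega)).2 (Or.inr le_rfl)
  have hadj : ∀ w ∈ offPath c (J + 1), T.Adj w (c J) ↔ w = c (J + 1) := by
    refine fun w hw => ⟨fun hwJ => ?_, fun hw => hw ▸ (hc.adj_succ (by omega)).symm⟩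
    refine (hc.eq_of_adj_of_mem_offPath (by omega) (by omega) hw hwJ).resolve_left ?_
    omega
  have hdegJ := (card_filter_adj_le_degree (offPath c (J + 1)) (c (J + 1))).trans
    (hdeg _ (hc.ne_root _ (by omega)))
  refine h.wins_succ_of_embed hJ_succ hJ_notMem hadj (by omega) fun a b _ ha _ hstate => ?_
  have hfree := h.free_of_embed_claim (b := b) hJ_succ hJ_notMem ha
  have hunemb := unembedded_insert_update (φ := φ) (a := a) hJ_notMem
  rw [hc.insert_offPath_succ (by omega) (by omega)] at hstate hfree hunemb
  have hcentre : ∀ u ∈ unembedded (offPath c (J + 1)) φ, φ (c (J + 1)) ≠ u := fun u hu =>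
    mem_unembedded.1 hu _ hJ_succ
  have hne : φ (c (J + 1)) ≠ φ (c 1) :=
    h.path_ne hc (by omega) (by omega) (by omega) (by omega) (by omega) (by omega)
  have hfree_start : ∀ u ∈ unembedded (offPath c (J + 1)) φ,
      (P.claim s(φ (c (J + 1)), a) s(φ (c (J + 1)), b)).Free s(φ (c 1), u) := fun u hu =>
    (hstart u hu).claim_star (by simp [hcentre u hu, hne])
  have hup : update φ (c J) a (c 1) = φ (c 1) :=
    update_of_ne ((hc.eq_iff (by omega) (by omega)).not.2 (by omega)) ..
  refine (hstate.pathState hc hJ hdeg hm (fun u hu => ?_) hfree ?_).wins hc hUV hJ le_rfl (by omega)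
  · rw [hup]
    exact hfree_start u (mem_of_mem_erase (hunemb ▸ hu))
  · rw [hup, update_self]
    exact hfree_start a ha

end GreedyState

omit [Fintype U] in
theorem GreedyState.exists_root_path_start (hc : IsBarePath T v par c m) (hm : 0 < m)
    (hV : 2 ≤ Fintype.card V) (hD : Fintype.card V < 2 ^ (D + 1)) (p : V) :
    ∃ φ, GreedyState T v p D {c 0, v} φ ⟨∅, ∅⟩ := by
  have h : GreedyState T v p D {v} (fun _ => p) ⟨∅, ∅⟩ := .singleton hD
  have hcard := card_unembedded h.injOn
  rw [card_singleton] at hcard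
  obtain ⟨a, ha⟩ := card_pos.1 (show 0 < #(unembedded {v} fun _ : U => p) by omega)
  refine ⟨_, h.embed_of_forall_not_adj (y := c 0) ?_ (fun x hx => ?_) ha⟩
  · simpa using hc.ne_root 0 (Nat.zero_le _)
  · rw [mem_singleton.1 hx, hc.adj_iff, hc.par_eq 0 hm]
    simpa using fun _ => hc.ne_root 1 hm

omit [DecidableEq U] in
theorem IsBarePath.wins (hc : IsBarePath T v par c m) (hUV : Fintype.card U = Fintype.card V)
    (hD : Fintype.card V < 2 ^ (D + 1)) (hdeg : ∀ x, x ≠ v → T.degree x ≤ d)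
    (hroot : 2 * D + 4 + 2 * T.degree v ≤ Fintype.card V) (hm : 6 * D + 2 * d + 8 ≤ m) :
    Wins T v p (Fintype.card V) ⟨∅, ∅⟩ := by
  classical
  obtain ⟨φ, h⟩ := GreedyState.exists_root_path_start hc (by omega) (by omega) hD p
  obtain ⟨J, hJ⟩ : ∃ J, J = 2 * D + d + 3 := ⟨_, rfl⟩
  have hcard := hc.card_erase_offPath (J := J) (by omega) (by omega)
  have hcard' := hc.card_offPath (J := J + 1) (by omega)
  have hle := card_le_univ ((Ico 2 (m + 1)).image c)
  rw [hc.card_image_Ico le_rfl] at hle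
  have hS := hc.pair_subset_erase_offPath (J := J + 1) (by omega) (by omega)
  have hrounds : Fintype.card V = J + 1 + 1 + #((offPath c (J + 1)).erase (c 1) \ {c 0, v}) := by
    rw [card_sdiff_of_subset hS, card_pair (hc.ne_root 0 (by omega)), hcard]
    omega
  rw [hrounds]
  refine h.wins_of_root_neighbors_subset (d := d) hc.toIsParentMap hS ?_ ?_ ?_ ?_ hdeg (by omega)
    fun φ P hstate => hstate.wins_of_embed_path_start hc (by omega) (by omega) hdeg (by omega)
      fun φ P hstate =>
        hstate.wins_of_embed_path_end hc hUV.le (by omega) hdeg (by omega) (by omega)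
  · intro w hw hwv hpar
    obtain rfl : w = c 0 := by simpa [hwv] using hw
    rw [hc.par_eq 0 (by omega)] at hpar
    simp at hpar
  · intro y hy
    obtain ⟨hy, hyS⟩ := mem_sdiff.1 hy
    simp only [mem_insert, mem_singleton, not_or] at hyS
    exact hc.par_mem_erase_offPath (by omega) (by omega) hyS.2 hy hyS.1
  · exact fun y hy =>
      hc.neighbor_mem_erase_offPath (by omega) (by omega) ((T.mem_neighborFinset v y).1 hy)
  · have := card_union_le {c 0, v} (T.neighborFinset v)
    have := card_le_two (a := c 0) (b := v)
    rw [T.card_neighborFinset_eq_degree] at *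
    omega

end BarePathGame

section Matching

variable {α β : Type*} {bad : α → β → Prop} [DecidableRel bad] {X Y Z : Finset α} {R : Finset β}
  {d D e : ℕ}

theorem two_mul_card_heavy_rows_le (hcard : #R = #X) (hcol : ∀ a ∈ R, #{x ∈ X | bad x a} ≤ D) :
    2 * #{x ∈ X | 2 * D < #{a ∈ R | bad x a}} ≤ #X := by
  have hcount : #{x ∈ X | 2 * D < #{a ∈ R | bad x a}} * (2 * D + 1) ≤ #X * D :=
    calc #{x ∈ X | 2 * D < #{a ∈ R | bad x a}} * (2 * D + 1)
        ≤ ∑ x ∈ X with 2 * D < #{a ∈ R | bad x a}, #{a ∈ R | bad x a} :=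
          card_nsmul_le_sum _ _ (2 * D + 1) fun x hx => (mem_filter.1 hx).2
      _ ≤ ∑ x ∈ X, #{a ∈ R | bad x a} := sum_le_sum_of_subset (filter_subset _ _)
      _ = ∑ a ∈ R, #{x ∈ X | bad x a} :=
          sum_card_bipartiteAbove_eq_sum_card_bipartiteBelow bad
      _ ≤ #X * D := hcard ▸ sum_le_card_nsmul _ _ _ hcol
  nlinarith

theorem card_bad_columns_le (hrow : ∀ x ∈ Y, #{a ∈ R | bad x a} ≤ d) :
    #{a ∈ R | ∃ x ∈ Y, bad x a} ≤ #Y * d := by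
  classical
  refine (card_le_card fun a ha => ?_).trans
    (card_biUnion_le_card_mul Y (fun x => {a ∈ R | bad x a}) d hrow)
  obtain ⟨ha, x, hx, hxa⟩ := mem_filter.1 ha
  exact mem_biUnion.2 ⟨x, hx, mem_filter.2 ⟨ha, hxa⟩⟩

theorem exists_mem_not_bad_pair {a b : β} (ha : #{x ∈ Z | bad x a} ≤ D)
    (hb : #{x ∈ Z | bad x b} ≤ D) (hZ : 2 * D < #Z) : ∃ x ∈ Z, ¬ bad x a ∧ ¬ bad x b := by
  classical
  have hlt : #({x ∈ Z | bad x a} ∪ {x ∈ Z | bad x b}) < #Z := by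
    have := card_union_le {x ∈ Z | bad x a} {x ∈ Z | bad x b}
    omega
  obtain ⟨x, hx, hxbad⟩ := exists_mem_notMem_of_card_lt_card hlt
  exact ⟨x, hx, by simpa [hx] using hxbad⟩

variable [DecidableEq α] [DecidableEq β]

/-- A player who repeatedly names an unmatched row of `X` and two unmatched columns of `R`, the
opponent deciding which of the two the row is matched to, can match the rows `X` with the columns
`R` without ever naming a bad pair. -/
inductive ForcesMatching (bad : α → β → Prop) : Finset α → Finset β → Prop
  | singleton {x : α} {a : β} (h : ¬ bad x a) : ForcesMatching bad {x} {a}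
  | step {X : Finset α} {R : Finset β} {x : α} {a b : β} (hx : x ∈ X) (ha : a ∈ R) (hb : b ∈ R)
      (hab : a ≠ b) (hxa : ¬ bad x a) (hxb : ¬ bad x b)
      (hnext_a : ForcesMatching bad (X.erase x) (R.erase a))
      (hnext_b : ForcesMatching bad (X.erase x) (R.erase b)) : ForcesMatching bad X R

namespace ForcesMatching

theorem union (hZY : Disjoint Z Y) (hcard : #R = #Z + #Y) (he : e + 1 ≤ #Y)
    (hrow : ∀ x ∈ Z, #{a ∈ R | bad x a} ≤ e)
    (hnext : ∀ R' ⊆ R, #R' = #Y → ForcesMatching bad Y R') : ForcesMatching bad (Z ∪ Y) R := by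
  induction Z using Finset.induction_on generalizing R with
  | empty =>
    rw [empty_union]
    exact hnext R subset_rfl (by simpa using hcard)
  | insert x Z hx ih =>
    rw [disjoint_insert_left] at hZY
    rw [card_insert_of_notMem hx] at hcard
    have hsplit := card_filter_add_card_filter_not (s := R) fun a => bad x a
    have hbad := hrow x (mem_insert_self x Z)
    obtain ⟨a, ha, b, hb, hab⟩ := one_lt_card.1 (show 1 < #{a ∈ R | ¬ bad x a} by omega)
    rw [mem_filter] at ha hb
    have herase : (insert x Z ∪ Y).erase x = Z ∪ Y := by
      rw [insert_union, erase_insert]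
      simp [hx, hZY.1]
    have hrest : ∀ c ∈ R, ForcesMatching bad ((insert x Z ∪ Y).erase x) (R.erase c) := by
      intro c hc
      rw [herase]
      refine ih hZY.2 ?_ (fun y hy => ?_) fun R' hR' => hnext R' (hR'.trans (erase_subset c R))
      · rw [card_erase_of_mem hc]
        omega
      · exact (card_le_card (filter_subset_filter _ (erase_subset c R))).trans
          (hrow y (mem_insert_of_mem hy))
    exact .step (by simp) ha.1 hb.1 hab ha.2 hb.2 (hrest a ha.1) (hrest b hb.1)

omit [DecidableRel bad] in
theorem of_forall_not_bad (hcard : #R = #Y) (hY : Y.Nonempty)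
    (hgood : ∀ x ∈ Y, ∀ a ∈ R, ¬ bad x a) : ForcesMatching bad Y R := by
  classical
  obtain ⟨y, hy⟩ := hY
  have hcard_erase := card_erase_add_one hy
  rw [← insert_erase hy, insert_eq, union_comm]
  refine union (e := 0) (by simp) (by simp; omega) (by simp) (fun x hx => ?_) fun R' hR' hone => ?_
  · exact (card_eq_zero.2 (filter_eq_empty_iff.2 fun a => hgood x (mem_of_mem_erase hx) a)).le
  · obtain ⟨a, rfl⟩ := card_eq_one.1 (hone.trans (card_singleton y))
    exact .singleton (hgood y hy a (singleton_subset_iff.1 hR'))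

theorem of_card_bad_le_one (hcard : #R = #Y) (hrow : ∀ x ∈ Y, #{a ∈ R | bad x a} ≤ 1)
    (hgood : 2 ≤ #{x ∈ Y | ∀ a ∈ R, ¬ bad x a}) : ForcesMatching bad Y R := by
  have hsplit := card_filter_add_card_filter_not (s := Y) fun x => ∀ a ∈ R, ¬ bad x a
  rw [← filter_union_filter_not_eq (fun x => ∀ a ∈ R, ¬ bad x a) Y, union_comm]
  refine union (disjoint_filter_filter_not Y Y _).symm (by omega) hgood
    (fun x hx => hrow x (mem_filter.1 hx).1) fun R' hR' hcard' => ?_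
  exact of_forall_not_bad hcard' (card_pos.1 (by omega)) fun x hx a ha =>
    (mem_filter.1 hx).2 a (hR' ha)

theorem of_card_bad_columns_le_one (hcard : #R = #Y)
    (hcolumns : #{a ∈ R | ∃ x ∈ Y, bad x a} ≤ 1) (hcol : ∀ a ∈ R, #{x ∈ Y | bad x a} ≤ D)
    (hY : D + 2 ≤ #Y) : ForcesMatching bad Y R := by
  refine of_card_bad_le_one hcard (fun x hx => (card_le_card fun a ha => ?_).trans hcolumns) ?_
  · rw [mem_filter] at ha ⊢
    exact ⟨ha.1, x, hx, ha.2⟩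
  · have hsplit := card_filter_add_card_filter_not (s := Y) fun x => ∀ a ∈ R, ¬ bad x a
    suffices #{x ∈ Y | ¬ ∀ a ∈ R, ¬ bad x a} ≤ D by omega
    rcases eq_empty_or_nonempty {x ∈ Y | ¬ ∀ a ∈ R, ¬ bad x a} with hempty | ⟨x, hx⟩
    · exact (card_eq_zero.2 hempty).trans_le D.zero_le
    · push Not at hx
      obtain ⟨hx, c, hc, hxc⟩ := mem_filter.1 hx
      refine (card_le_card fun y hy => ?_).trans (hcol c hc)
      push Not at hy
      obtain ⟨hy, a, ha, hya⟩ := mem_filter.1 hy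
      obtain rfl : a = c := card_le_one.1 hcolumns a (mem_filter.2 ⟨ha, y, hy, hya⟩) c
        (mem_filter.2 ⟨hc, x, hx, hxc⟩)
      exact mem_filter.2 ⟨hy, hya⟩

/-- Offering two bad columns to a row outside `Y` gets rid of one of them. -/
theorem union_of_card_bad_columns_le (hZY : Disjoint Z Y) (hcard : #R = #Z + #Y)
    (hrow : ∀ x ∈ Z, #{a ∈ R | bad x a} ≤ e) (hcol : ∀ a ∈ R, #{x ∈ Z ∪ Y | bad x a} ≤ D)
    (hcolumns : #{a ∈ R | ∃ x ∈ Y, bad x a} + 2 * D ≤ #Z) (he : e + 1 ≤ #Y) (hD : D + 2 ≤ #Y) :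
    ForcesMatching bad (Z ∪ Y) R := by
  induction hk : #Z generalizing Z R with
  | zero =>
    obtain rfl := card_eq_zero.1 hk
    rw [empty_union] at hcol ⊢
    exact of_card_bad_columns_le_one (by omega) (by omega) hcol hD
  | succ k ih =>
    rcases le_or_gt #{a ∈ R | ∃ x ∈ Y, bad x a} 1 with hone | htwo
    · refine union hZY hcard he hrow fun R' hR' hcard' => of_card_bad_columns_le_one hcard'
        ((card_le_card (filter_subset_filter _ hR')).trans hone) (fun a ha => ?_) hD
      exact (card_le_card (filter_subset_filter _ subset_union_right)).trans (hcol a (hR' ha))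
    obtain ⟨a, ha, b, hb, hab⟩ := one_lt_card.1 htwo
    have hcolZ : ∀ c ∈ R, #{x ∈ Z | bad x c} ≤ D := fun c hc =>
      (card_le_card (filter_subset_filter _ subset_union_left)).trans (hcol c hc)
    obtain ⟨x, hx, hxa, hxb⟩ := exists_mem_not_bad_pair (hcolZ a (mem_filter.1 ha).1)
      (hcolZ b (mem_filter.1 hb).1) (by omega)
    have hxY : x ∉ Y := disjoint_left.1 hZY hx
    have hrest : ∀ c ∈ R.filter (fun a => ∃ x ∈ Y, bad x a),
        ForcesMatching bad ((Z ∪ Y).erase x) (R.erase c) := by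
      intro c hc
      have hcR := (mem_filter.1 hc).1
      have hR := card_erase_add_one hcR
      have hZ := card_erase_add_one hx
      have hbadcols := card_erase_add_one hc
      rw [← filter_erase] at hbadcols
      rw [erase_union_distrib, erase_eq_of_notMem hxY]
      refine ih (hZY.mono_left (erase_subset x Z)) (by omega) (fun y hy => ?_) (fun a ha => ?_)
        (by omega) (by omega)
      · exact (card_le_card (filter_subset_filter _ (erase_subset c R))).trans
          (hrow y (mem_of_mem_erase hy))
      · refine (card_le_card (filter_subset_filter _ ?_)).trans (hcol a (mem_of_mem_erase ha))
        exact union_subset_union_left (erase_subset x Z)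
    exact .step (mem_union_left Y hx) (mem_filter.1 ha).1 (mem_filter.1 hb).1 hab hxa hxb
      (hrest a ha) (hrest b hb)

end ForcesMatching

theorem ForcesMatching.of_card_bad_le (hcard : #R = #X) (hrow : ∀ x ∈ X, #{a ∈ R | bad x a} ≤ e)
    (hcol : ∀ a ∈ R, #{x ∈ X | bad x a} ≤ D) (he : 2 * (e + 1) ≤ #X)
    (hD : 8 * D ^ 2 + 16 * D + 4 ≤ #X) : ForcesMatching bad X R := by
  have hheavy := two_mul_card_heavy_rows_le hcard hcol
  have hsplit := card_filter_add_card_filter_not (s := X) fun x => 2 * D < #{a ∈ R | bad x a}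
  rw [← filter_union_filter_not_eq (fun x => 2 * D < #{a ∈ R | bad x a}) X]
  refine union (disjoint_filter_filter_not X X _) (by omega) (by omega)
    (fun x hx => hrow x (mem_filter.1 hx).1) fun R' hR' hcard' => ?_
  set L := {x ∈ X | ¬ 2 * D < #{a ∈ R | bad x a}}
  have hrowL : ∀ x ∈ L, #{a ∈ R' | bad x a} ≤ 2 * D := fun x hx =>
    (card_le_card (filter_subset_filter _ hR')).trans (not_lt.1 (mem_filter.1 hx).2)
  obtain ⟨Y, hYL, hY⟩ := exists_subset_card_eq (show 2 * D + 2 ≤ #L by nlinarith)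
  have hcolumns := card_bad_columns_le fun x hx => hrowL x (hYL hx)
  have hL := card_sdiff_add_card_eq_card hYL
  rw [← sdiff_union_of_subset hYL]
  refine union_of_card_bad_columns_le (D := D) (e := 2 * D) sdiff_disjoint (by omega)
    (fun x hx => hrowL x (mem_sdiff.1 hx).1) (fun a ha => ?_) ?_ (by omega) (by omega)
  · rw [sdiff_union_of_subset hYL]
    exact (card_le_card (filter_subset_filter _ (filter_subset _ _))).trans (hcol a (hR' ha))
  · rw [hY] at hcolumns
    nlinarith

end Matching

section LeafFamily

variable {U V : Type*} {T : SimpleGraph U} {v : U} {l : U → U} {X Y Z : Finset U} {x y : U}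

theorem IsLeafFamily.injOn (hl : IsLeafFamily T v Z l) : Set.InjOn l Z := fun x hx y hy hxy =>
  (hl.adj_iff y hy x).1 (hxy ▸ (hl.adj_iff x hx x).2 rfl)

variable [Fintype U] [DecidableEq U]

/-- All vertices of the tree except the leaves which `l` assigns to the vertices of `X`. -/
def offLeaves (l : U → U) (X : Finset U) : Finset U :=
  (X.image l)ᶜ

theorem mem_offLeaves {w : U} : w ∈ offLeaves l X ↔ ∀ x ∈ X, l x ≠ w := by
  simp [offLeaves]

theorem offLeaves_empty : offLeaves l ∅ = univ := by
  simp [offLeaves]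

theorem leaf_notMem_offLeaves (hx : x ∈ X) : l x ∉ offLeaves l X := fun h =>
  mem_offLeaves.1 h x hx rfl

namespace IsLeafFamily

theorem root_mem_offLeaves (hl : IsLeafFamily T v Z l) (hX : X ⊆ Z) : v ∈ offLeaves l X :=
  mem_offLeaves.2 fun x hx => hl.leaf_ne_root x (hX hx)

theorem mem_offLeaves_of_mem (hl : IsLeafFamily T v Z l) (hX : X ⊆ Z) (hy : y ∈ Z) :
    y ∈ offLeaves l X :=
  mem_offLeaves.2 fun x hx hxy => hl.leaf_notMem x (hX hx) (hxy ▸ hy)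

theorem leaf_mem_offLeaves (hl : IsLeafFamily T v Z l) (hX : X ⊆ Z) (hy : y ∈ Z) (hyX : y ∉ X) :
    l y ∈ offLeaves l X :=
  mem_offLeaves.2 fun _ hx hxy => hyX (hl.injOn (hX hx) hy hxy ▸ hx)

theorem insert_offLeaves (hl : IsLeafFamily T v Z l) (hX : X ⊆ Z) (hx : x ∈ X) :
    insert (l x) (offLeaves l X) = offLeaves l (X.erase x) := by
  ext w
  simp only [mem_insert, mem_offLeaves, mem_erase]
  constructor
  · rintro (rfl | hw) y ⟨hyx, hy⟩
    · exact hl.injOn.ne (hX hy) (hX hx) hyx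
    · exact hw y hy
  · intro hw
    by_cases hwx : w = l x
    · exact Or.inl hwx
    · refine Or.inr fun y hy => ?_
      rcases eq_or_ne y x with rfl | hyx
      · exact Ne.symm hwx
      · exact hw y ⟨hyx, hy⟩

theorem card_offLeaves (hl : IsLeafFamily T v Z l) (hX : X ⊆ Z) :
    #(offLeaves l X) = Fintype.card U - #X := by
  rw [offLeaves, card_compl, card_image_of_injOn (hl.injOn.mono (mod_cast hX))]

theorem par_mem_offLeaves {par : U → U} (hl : IsLeafFamily T v Z l) (hpar : IsParentMap T v par)
    (hX : X ⊆ Z) (hyv : y ≠ v) : par y ∈ offLeaves l X := by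
  refine mem_offLeaves.2 fun x hx hxy => ?_
  have hadj : T.Adj (par y) y := (hpar.adj_iff _ _).2 (Or.inl ⟨hyv, rfl⟩)
  obtain rfl : y = x := (hl.adj_iff x (hX hx) y).1 (hxy ▸ hadj.symm)
  have hlv := hl.leaf_ne_root y (hX hx)
  have hpar_leaf : par (l y) = y :=
    (hl.adj_iff y (hX hx) _).1 ((hpar.adj_iff _ _).2 (Or.inl ⟨hlv, rfl⟩))
  have hlt := hpar.dist_lt (l y) hlv
  rw [hpar_leaf] at hlt
  exact (hxy ▸ hpar.dist_lt y hyv).asymm hlt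

end IsLeafFamily

variable [Fintype V] [DecidableEq V] {p : V} {φ : U → V} {P : Position V} {a b : V} {t : ℕ}

/-- The edges which allow the leaf at `x` to take over the vertex of the leaf at `y`, the latter
leaf moving to the unembedded vertex `a`, are still available. -/
structure IsSwap (l : U → U) (φ : U → V) (P : Position V) (x : U) (a : V) (y : U) : Prop where
  free_leaf : P.Free s(φ x, φ (l y))
  free_unembedded : P.Free s(φ y, a)

/-- The invariant while the leaves at the vertices of `X` are embedded, those at the vertices of
`Y` being available for a final swap. The relation `bad` contains the pairs which must not be
offered, as seen from the beginning of this stage. -/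
structure LeafState (T : SimpleGraph U) (v : U) (p : V) (l : U → U) (bad : U → V → Prop)
    (X Y : Finset U) (φ : U → V) (P : Position V) : Prop
    extends PartialCopy T v p (offLeaves l X) φ P.client where
  disjoint : Disjoint X Y
  free_of_not_bad : ∀ x ∈ X, ∀ a ∈ unembedded (offLeaves l X) φ, ¬ bad x a → P.Free s(φ x, a)
  exists_isSwap : ∀ x ∈ X, ∀ a ∈ unembedded (offLeaves l X) φ,
    ∃ y ∈ Y, ∃ z ∈ Y, y ≠ z ∧ IsSwap l φ P x a y ∧ IsSwap l φ P x a z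

variable {bad : U → V → Prop}

theorem PartialCopy.embed_leaf {C C' : Finset (Sym2 V)}
    (h : PartialCopy T v p (offLeaves l X) φ C) (hl : IsLeafFamily T v Z l) (hX : X ⊆ Z)
    (hx : x ∈ X) (ha : a ∈ unembedded (offLeaves l X) φ) (hC : C ⊆ C') (hxa : s(φ x, a) ∈ C') :
    PartialCopy T v p (offLeaves l (X.erase x)) (update φ (l x) a) C' := by
  rw [← hl.insert_offLeaves hX hx]
  refine h.embed (leaf_notMem_offLeaves hx) ha hC fun w _ hw => ?_
  rwa [(hl.adj_iff x (hX hx) w).1 hw]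

theorem IsSwap.embed {z : U} {u : V} (h : IsSwap l φ P z u y) (hl : IsLeafFamily T v Z l)
    (hX : X ⊆ Z) (hφ : Set.InjOn φ (offLeaves l X)) (hx : x ∈ X) (hz : z ∈ X) (hzx : z ≠ x)
    (hy : y ∈ Z) (hyX : y ∉ X) (hu : u ∈ unembedded (offLeaves l X) φ) :
    IsSwap l (update φ (l x) a) (P.claim s(φ x, a) s(φ x, b)) z u y := by
  have hup : ∀ w ∈ offLeaves l X, update φ (l x) a w = φ w := fun w hw =>
    update_of_ne (mem_offLeaves.1 hw x hx).symm ..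
  have hxS := hl.mem_offLeaves_of_mem hX (hX hx)
  have hzS := hl.mem_offLeaves_of_mem hX (hX hz)
  have hyS := hl.mem_offLeaves_of_mem hX hy
  have hlyS := hl.leaf_mem_offLeaves hX hy hyX
  have hxz := (hφ.ne hzS hxS hzx).symm
  have hxy := hφ.ne hxS hyS fun hxy => hyX (hxy ▸ hx)
  have hxly := hφ.ne hxS hlyS fun hxly => hl.leaf_notMem y hy (hxly ▸ hX hx)
  have hxu := mem_unembedded.1 hu x hxS
  constructor
  · rw [hup z hzS, hup _ hlyS]
    exact h.free_leaf.claim_star (by simp [hxz, hxly])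
  · rw [hup y hyS]
    exact h.free_unembedded.claim_star (by simp [hxy, hxu])

theorem LeafState.embed (h : LeafState T v p l bad X Y φ P) (hl : IsLeafFamily T v Z l)
    (hX : X ⊆ Z) (hY : Y ⊆ Z) (hx : x ∈ X) (ha : a ∈ unembedded (offLeaves l X) φ) :
    LeafState T v p l bad (X.erase x) Y (update φ (l x) a) (P.claim s(φ x, a) s(φ x, b)) := by
  have hxS := hl.mem_offLeaves_of_mem hX (hX hx)
  have hunemb : unembedded (offLeaves l (X.erase x)) (update φ (l x) a) ⊆
      unembedded (offLeaves l X) φ := by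
    rw [← hl.insert_offLeaves hX hx, unembedded_insert_update (leaf_notMem_offLeaves hx)]
    exact erase_subset _ _
  refine ⟨h.toPartialCopy.embed_leaf hl hX hx ha (subset_insert _ _) (mem_insert_self _ _),
    h.disjoint.mono_left (erase_subset x X), fun z hz u hu hzu => ?_, fun z hz u hu => ?_⟩ <;>
    obtain ⟨hzx, hz⟩ := mem_erase.1 hz <;> have hu := hunemb hu
  · have hzS := hl.mem_offLeaves_of_mem hX (hX hz)
    rw [update_of_ne (mem_offLeaves.1 hzS x hx).symm]
    have hxz := (h.injOn.ne hzS hxS hzx).symm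
    have hxu := mem_unembedded.1 hu x hxS
    exact (h.free_of_not_bad z hz u hu hzu).claim_star (by simp [hxz, hxu])
  · have hYX : ∀ y ∈ Y, y ∉ X := fun y hy => disjoint_right.1 h.disjoint hy
    obtain ⟨y, hy, w, hw, hyw, hswap_y, hswap_w⟩ := h.exists_isSwap z hz u hu
    exact ⟨y, hy, w, hw, hyw, hswap_y.embed hl hX h.injOn hx hz hzx (hY hy) (hYX y hy) hu,
      hswap_w.embed hl hX h.injOn hx hz hzx (hY hw) (hYX w hw) hu⟩

theorem PartialCopy.wins_of_swap (h : PartialCopy T v p (offLeaves l {x}) φ P.client)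
    (hl : IsLeafFamily T v Z l) (hx : x ∈ Z) (hy : y ∈ Z) (hxy : x ≠ y)
    (ha : a ∈ unembedded (offLeaves l {x}) φ) (hclient_x : s(φ x, φ (l y)) ∈ P.client)
    (hclient_y : s(φ y, a) ∈ P.client) : Wins T v p t P := by
  have hX : {x} ⊆ Z := singleton_subset_iff.2 hx
  have hlyS := hl.leaf_mem_offLeaves hX hy (by simpa using hxy.symm)
  set S := (offLeaves l {x}).erase (l y)
  have hS : insert (l y) S = offLeaves l {x} := insert_erase hlyS
  have hlyS' : l y ∉ S := notMem_erase _ _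
  have huniv : insert (l x) (offLeaves l {x}) = univ := by
    rw [hl.insert_offLeaves hX (mem_singleton_self x), erase_singleton, offLeaves_empty]
  have haS : a ∈ unembedded S φ :=
    mem_unembedded.2 fun w hw => mem_unembedded.1 ha w (mem_of_mem_erase hw)
  have hcopy := (h.mono (mem_erase.2 ⟨(hl.leaf_ne_root y hy).symm, h.root_mem⟩)
    (erase_subset _ _) subset_rfl).embed hlyS' haS subset_rfl
    fun w _ hw => by rwa [(hl.adj_iff y hy w).1 hw]
  have hly : φ (l y) ∈ unembedded (insert (l y) S) (update φ (l y) a) := by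
    rw [unembedded_insert_update hlyS', mem_erase, mem_unembedded]
    exact ⟨mem_unembedded.1 ha _ hlyS, fun w hw =>
      h.injOn.ne (mem_of_mem_erase hw) hlyS (mem_erase.1 hw).1⟩
  rw [hS] at hcopy hly
  have hxly : x ≠ l y := fun hxly => hl.leaf_notMem y hy (hxly ▸ hx)
  have hcopy' := hcopy.embed (leaf_notMem_offLeaves (mem_singleton_self x)) hly subset_rfl
    fun w _ hw => by rwa [(hl.adj_iff x hx w).1 hw, update_of_ne hxly]
  rw [huniv] at hcopy'
  exact hcopy'.wins

theorem PartialCopy.wins_one_of_leaf (h : PartialCopy T v p (offLeaves l {x}) φ P.client)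
    (hl : IsLeafFamily T v Z l) (hx : x ∈ Z) (hy : y ∈ Z) (hxy : x ≠ y)
    (ha : a ∈ unembedded (offLeaves l {x}) φ) (hclient : s(φ x, φ (l y)) ∈ P.client)
    (hfree_x : P.Free s(a, φ x)) (hfree_y : P.Free s(a, φ y)) : Wins T v p 1 P := by
  have hX : {x} ⊆ Z := singleton_subset_iff.2 hx
  have hxS := hl.mem_offLeaves_of_mem hX hx
  have hyS := hl.mem_offLeaves_of_mem hX hy
  have hroot : ∀ z ∈ Z, p ≠ φ z := fun z hz => h.map_root ▸
    (h.injOn.ne (hl.mem_offLeaves_of_mem hX hz) h.root_mem (hl.ne_root z hz)).symm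
  refine Wins.star (h.injOn.ne hxS hyS hxy) (hroot x hx) (hroot y hy) hfree_x hfree_y ?_ ?_
  · have hcopy := h.embed_leaf hl hX (mem_singleton_self x) ha
      (subset_insert s(a, φ x) _) (by simp [Sym2.eq_swap])
    rw [erase_singleton, offLeaves_empty] at hcopy
    exact hcopy.wins
  · refine PartialCopy.wins_of_swap (h.mono h.root_mem subset_rfl (subset_insert _ _)) hl hx hy hxy
      ha (mem_insert_of_mem hclient) ?_
    rw [Sym2.eq_swap]
    exact mem_insert_self _ _

theorem LeafState.wins_two (h : LeafState T v p l bad {x} Y φ P) (hl : IsLeafFamily T v Z l)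
    (hx : x ∈ Z) (hY : Y ⊆ Z) (ha : a ∈ unembedded (offLeaves l {x}) φ) (hxa : ¬ bad x a) :
    Wins T v p 2 P := by
  have hX : {x} ⊆ Z := singleton_subset_iff.2 hx
  have hYx : ∀ y ∈ Y, y ≠ x := fun y hy hyx =>
    disjoint_left.1 h.disjoint (mem_singleton_self x) (hyx ▸ hy)
  have hlyS : ∀ y ∈ Y, l y ∈ offLeaves l {x} := fun y hy =>
    hl.leaf_mem_offLeaves hX (hY hy) (by simpa using hYx y hy)
  obtain ⟨y, hy, z, hz, hyz, hswap_y, hswap_z⟩ := h.exists_isSwap x (mem_singleton_self x) a ha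
  have hfree := h.free_of_not_bad x (mem_singleton_self x) a ha hxa
  have hroot : ∀ y ∈ Y, p ≠ φ (l y) := fun y hy => h.map_root ▸
    (h.injOn.ne (hlyS y hy) h.root_mem (hl.leaf_ne_root y (hY hy))).symm
  have hwins : ∀ y ∈ Y, ∀ z ∈ Y, IsSwap l φ P x a y →
      Wins T v p 1 (P.claim s(φ x, φ (l y)) s(φ x, φ (l z))) := by
    intro y hy z hz hswap
    have hclaim : ∀ w ∈ Z, P.Free s(φ w, a) →
        (P.claim s(φ x, φ (l y)) s(φ x, φ (l z))).Free s(a, φ w) := by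
      intro w hw hfree
      have hla : ∀ y ∈ Y, φ (l y) ≠ a := fun y hy => mem_unembedded.1 ha _ (hlyS y hy)
      have hlw : ∀ y ∈ Y, φ (l y) ≠ φ w := fun y hy =>
        h.injOn.ne (hlyS y hy) (hl.mem_offLeaves_of_mem hX hw) fun hlyw =>
          hl.leaf_notMem y (hY hy) (hlyw ▸ hw)
      rw [Sym2.eq_swap (a := a)]
      refine hfree.claim_star (Or.inr ?_)
      simp [hla y hy, hla z hz, hlw y hy, hlw z hz]
    exact PartialCopy.wins_one_of_leaf (h.mono h.root_mem subset_rfl (subset_insert _ _)) hl hx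
      (hY hy) (hYx y hy).symm ha (mem_insert_self _ _) (hclaim x hx hfree)
      (hclaim y (hY hy) hswap.free_unembedded)
  exact .star (h.injOn.ne (hlyS y hy) (hlyS z hz) (hl.injOn.ne (hY hy) (hY hz) hyz)) (hroot y hy)
    (hroot z hz) hswap_y.free_leaf hswap_z.free_leaf (hwins y hy z hz hswap_y)
    (hwins z hz y hy hswap_z)

theorem LeafState.wins (hforces : ForcesMatching bad X (unembedded (offLeaves l X) φ))
    (hl : IsLeafFamily T v Z l) (hX : X ⊆ Z) (hY : Y ⊆ Z) (h : LeafState T v p l bad X Y φ P) :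
    Wins T v p (#X + 1) P := by
  generalize hR : unembedded (offLeaves l X) φ = R at hforces
  induction hforces generalizing φ P with
  | @singleton x a hxa =>
    refine h.wins_two (a := a) hl (hX (mem_singleton_self x)) hY ?_ hxa
    exact hR ▸ mem_singleton_self a
  | @step X R x a b hx ha hb hab hxa hxb _ _ ih_a ih_b =>
    subst hR
    have hroot : ∀ u ∈ unembedded (offLeaves l X) φ, p ≠ u := fun u hu =>
      h.map_root ▸ mem_unembedded.1 hu v h.root_mem
    have hunemb : ∀ u, unembedded (offLeaves l (X.erase x)) (update φ (l x) u) =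
        (unembedded (offLeaves l X) φ).erase u := fun u => by
      rw [← hl.insert_offLeaves hX hx, unembedded_insert_update (leaf_notMem_offLeaves hx)]
    rw [← card_erase_add_one hx]
    exact .star hab (hroot a ha) (hroot b hb) (h.free_of_not_bad x hx a ha hxa)
      (h.free_of_not_bad x hx b hb hxb)
      (ih_a ((erase_subset x X).trans hX) (h.embed hl hX hY hx ha) (hunemb a))
      (ih_b ((erase_subset x X).trans hX) (h.embed hl hX hY hx hb) (hunemb b))

variable [DecidableRel T.Adj] {D d q : ℕ} {par : U → U}

theorem GreedyState.exists_isSwap (h : GreedyState T v p D (offLeaves l X) φ P)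
    (hl : IsLeafFamily T v Z l) (hX : X ⊆ Z) (hY : Y ⊆ Z) (hXY : Disjoint X Y)
    (hdeg : T.degree x ≤ d) (hcard : 2 * D + d + 2 ≤ #Y) (hx : x ∈ X)
    (ha : a ∈ unembedded (offLeaves l X) φ) :
    ∃ y ∈ Y, ∃ z ∈ Y, y ≠ z ∧ IsSwap l φ P x a y ∧ IsSwap l φ P x a z := by
  have hxS := hl.mem_offLeaves_of_mem hX (hX hx)
  have hyS : ∀ y ∈ Y, y ∈ offLeaves l X := fun y hy => hl.mem_offLeaves_of_mem hX (hY hy)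
  have hlyS : ∀ y ∈ Y, l y ∈ offLeaves l X := fun y hy =>
    hl.leaf_mem_offLeaves hX (hY hy) (disjoint_right.1 hXY hy)
  have hinj : Set.InjOn (fun y => φ (l y)) Y := fun y hy z hz hyz =>
    hl.injOn (hY hy) (hY hz) (h.injOn (hlyS y hy) (hlyS z hz) hyz)
  have hleaf : #{y ∈ Y | s(φ x, φ (l y)) ∈ P.waiter} ≤ D + d :=
    (Position.card_filter_le_waiterDegree hinj _).trans ((h.waiterDegree_le x hxS).trans
      (Nat.add_le_add_left ((card_filter_adj_le_degree _ x).trans hdeg) D))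
  have hunemb : #{y ∈ Y | s(a, φ y) ∈ P.waiter} ≤ D :=
    (Position.card_filter_le_waiterDegree (h.injOn.mono hyS) a).trans
      (h.waiterDegree_le_of_mem_unembedded ha)
  have hswap : ∀ y ∈ Y, s(φ x, φ (l y)) ∉ P.waiter → s(a, φ y) ∉ P.waiter →
      IsSwap l φ P x a y := by
    intro y hy hxy hya
    have hxly : x ≠ l y := fun hxly => hl.leaf_notMem y (hY hy) (hxly ▸ hX hx)
    refine ⟨⟨h.injOn.ne hxS (hlyS y hy) hxly, fun hclient => ?_, hxy⟩,
      h.free_of_notMem_waiter (hyS y hy) ha (Sym2.eq_swap ▸ hya)⟩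
    have hxy := (hl.adj_iff y (hY hy) x).1 (h.adj_of_mem_client hxS (hlyS y hy) hclient)
    exact disjoint_left.1 hXY hx (hxy ▸ hy)
  set B := {y ∈ Y | s(φ x, φ (l y)) ∈ P.waiter} ∪ {y ∈ Y | s(a, φ y) ∈ P.waiter}
  have hB : #B ≤ D + d + D := (card_union_le _ _).trans (Nat.add_le_add hleaf hunemb)
  have hYB := le_card_sdiff B Y
  obtain ⟨y, hy, z, hz, hyz⟩ := one_lt_card.1 (show 1 < #(Y \ B) by omega)
  have hmem : ∀ y ∈ Y \ B, y ∈ Y ∧ IsSwap l φ P x a y := by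
    intro y hy
    simp only [B, mem_sdiff, mem_union, mem_filter, not_or, not_and] at hy
    exact ⟨hy.1, hswap y hy.1 (hy.2.1 hy.1) (hy.2.2 hy.1)⟩
  exact ⟨y, (hmem y hy).1, z, (hmem z hz).1, hyz, (hmem y hy).2, (hmem z hz).2⟩

theorem GreedyState.wins_of_isLeafFamily (h : GreedyState T v p D (offLeaves l X) φ P)
    (hUV : Fintype.card U = Fintype.card V) (hl : IsLeafFamily T v Z l) (hX : X ⊆ Z) (hY : Y ⊆ Z)
    (hXY : Disjoint X Y) (hdeg : ∀ x, x ≠ v → T.degree x ≤ d) (hcardY : 2 * D + d + 2 ≤ #Y)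
    (hcardX : 2 * (D + d + 1) ≤ #X) (hD : 8 * D ^ 2 + 16 * D + 4 ≤ #X) :
    Wins T v p (#X + 1) P := by
  have hdegX : ∀ x ∈ X, T.degree x ≤ d := fun x hx => hdeg x (hl.ne_root x (hX hx))
  have hXS : ∀ x ∈ X, x ∈ offLeaves l X := fun x hx => hl.mem_offLeaves_of_mem hX (hX hx)
  have hforces : ForcesMatching (fun x a => s(φ x, a) ∈ P.waiter) X
      (unembedded (offLeaves l X) φ) := by
    refine .of_card_bad_le (e := D + d) (D := D) ?_ (fun x hx => ?_) (fun a ha => ?_) hcardX hD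
    · have := card_le_univ X
      rw [card_unembedded h.injOn, hl.card_offLeaves hX]
      omega
    · exact (h.card_waiter_neighbors_le (hXS x hx)).trans
        (Nat.add_le_add_left ((card_filter_adj_le_degree _ x).trans (hdegX x hx)) D)
    · simp only [Sym2.eq_swap (b := a)]
      exact (Position.card_filter_le_waiterDegree (h.injOn.mono hXS) a).trans
        (h.waiterDegree_le_of_mem_unembedded ha)
  exact LeafState.wins hforces hl hX hY ⟨h.toPartialCopy, hXY,
    fun x hx a ha => h.free_of_notMem_waiter (hXS x hx) ha,
    fun x hx a ha => h.exists_isSwap hl hX hY hXY (hdegX x hx) hcardY hx ha⟩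

omit [DecidableEq U] in
theorem IsLeafFamily.wins (hpar : IsParentMap T v par) (hl : IsLeafFamily T v Z l)
    (hZ : #Z = 2 * q) (hUV : Fintype.card U = Fintype.card V)
    (hcard : Fintype.card V < 2 ^ (D + 1)) (hdeg : ∀ x, x ≠ v → T.degree x ≤ d)
    (hroot : 2 * D + 3 + 2 * T.degree v ≤ Fintype.card V) (hq : 2 * (D + d + 1) ≤ q)
    (hD : 8 * D ^ 2 + 16 * D + 4 ≤ q) : Wins T v p (Fintype.card V) ⟨∅, ∅⟩ := by
  classical
  obtain ⟨X, hX, hXq⟩ := exists_subset_card_eq (show q ≤ #Z by omega)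
  have hYq := card_sdiff_of_subset hX
  have hS := hl.card_offLeaves hX
  have hv : {v} ⊆ offLeaves l X := singleton_subset_iff.2 (hl.root_mem_offLeaves hX)
  have hle := card_le_card hv
  have hrounds : Fintype.card V = #X + 1 + #(offLeaves l X \ {v}) := by
    rw [card_sdiff_of_subset hv]
    rw [card_singleton] at hle ⊢
    omega
  rw [hrounds]
  refine (GreedyState.singleton hcard).wins_of_root_neighbors_subset (d := d) hpar hv
    (fun w hw hwv => absurd (mem_singleton.1 hw) hwv)
    (fun y hy => hl.par_mem_offLeaves hpar hX (notMem_singleton.1 (mem_sdiff.1 hy).2))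
    (fun w hw => ?_) ?_ hdeg (by omega)
    fun φ P h => h.wins_of_isLeafFamily hUV hl hX sdiff_subset disjoint_sdiff hdeg
      (by omega) (by omega) (by omega)
  · refine mem_offLeaves.2 fun x hx hxw => hl.ne_root x (hX hx) ?_
    exact ((hl.adj_iff x (hX hx) v).1 (hxw ▸ (T.mem_neighborFinset v w).1 hw)).symm
  · have := card_union_le {v} (T.neighborFinset v)
    rw [card_singleton, T.card_neighborFinset_eq_degree] at this
    omega

end LeafFamily

section Main

theorem sq_le_two_pow {k : ℕ} (hk : 60 ≤ k) : (100 * (k + 1) ^ 2 + 10000) ^ 2 ≤ 2 ^ k := by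
  induction k, hk using Nat.le_induction with
  | base => norm_num
  | succ k hk ih =>
    -- The base grows by a factor of at most `7 / 5 < √2`.
    have hbase : 5 * (100 * (k + 1 + 1) ^ 2 + 10000) ≤ 7 * (100 * (k + 1) ^ 2 + 10000) := by
      nlinarith
    have hsq := Nat.pow_le_pow_left hbase 2
    rw [mul_pow, mul_pow] at hsq
    rw [pow_succ 2 k]
    omega

theorem log_sq_le_sqrt {n : ℕ} (hn : 2 ^ 60 ≤ n) :
    100 * (Nat.log 2 n + 1) ^ 2 + 10000 ≤ Nat.sqrt n := by
  have hlog : 60 ≤ Nat.log 2 n := Nat.le_log_of_pow_le one_lt_two hn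
  have hn0 : n ≠ 0 := (lt_of_lt_of_le (by norm_num) hn).ne'
  exact Nat.le_sqrt'.2 ((sq_le_two_pow hlog).trans (Nat.pow_log_le_self 2 hn0))

variable {U V : Type*} [Fintype U] [DecidableEq U] {T : SimpleGraph U} [DecidableRel T.Adj]
  {v : U} {par : U → U}

theorem IsParentMap.card_children_le (hpar : IsParentMap T v par) (x : U) :
    #(children v par x) ≤ #((T.neighborFinset x).erase v) := by
  refine card_le_card fun y hy => ?_
  have hy := mem_children.1 hy
  simpa [hy.1] using (hpar.adj_iff x y).2 (Or.inl hy)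

theorem IsParentMap.children_nonempty {y : U} (hpar : IsParentMap T v par) (hy : y ≠ v)
    (hyv : par y = v) (hdeg : T.degree y ≠ 1) : (children v par y).Nonempty := by
  by_contra hempty
  have hchild : ∀ w, ¬ (w ≠ v ∧ par w = y) := fun w hw =>
    hempty ⟨w, mem_children.2 hw⟩
  have hneighbors : T.neighborFinset y = {v} := by
    ext w
    rw [T.mem_neighborFinset, hpar.adj_iff, mem_singleton, or_iff_right (hchild w), hyv]
    simp [hy, eq_comm]
  exact hdeg (by rw [← T.card_neighborFinset_eq_degree, hneighbors, card_singleton])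

theorem Wins.of_isTree [Fintype V] [DecidableEq V] {D s : ℕ} (hT : T.IsTree)
    (hUV : Fintype.card U = Fintype.card V) (hD : Fintype.card V < 2 ^ (D + 1))
    (hs : s ^ 2 ≤ Fintype.card V) (hDs : 100 * (D + 1) ^ 2 + 10000 ≤ s)
    (hleaf : ∀ u, T.Adj v u → T.degree u ≠ 1)
    (hroot : 2 * T.degree v + 2 * D + 4 ≤ Fintype.card V)
    (hdeg : ∀ u, u ≠ v → 200 * #((T.neighborFinset u).erase v) ≤ s) (p : V) :
    Wins T v p (Fintype.card V) ⟨∅, ∅⟩ := by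
  obtain ⟨par, hpar⟩ := exists_isParentMap hT v
  have hchildren : ∀ x, x ≠ v → #(children v par x) ≤ s / 200 := fun x hx => by
    have := hpar.card_children_le x
    have := hdeg x hx
    omega
  have hdegree : ∀ x, x ≠ v → T.degree x ≤ s / 200 + 1 := fun x hx => by
    have := pred_card_le_card_erase (s := T.neighborFinset x) (a := v)
    have := hdeg x hx
    rw [T.card_neighborFinset_eq_degree] at *
    omega
  have hD_sq : 100 * D ^ 2 + 200 * D + 10100 ≤ s := by linarith
  have := Nat.le_self_pow two_ne_zero D
  have hcard : 2 * (s / 8) * (s / 200) + (2 * (2 * (s / 8)) + 1) * (s / 2) < Fintype.card U := by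
    have hq : 8 * (s / 8) ≤ s := Nat.mul_div_le s 8
    have hΔ : 200 * (s / 200) ≤ s := Nat.mul_div_le s 200
    have hm : 2 * (s / 2) ≤ s := Nat.mul_div_le s 2
    have hqΔ := Nat.mul_le_mul hq hΔ
    have hqm := Nat.mul_le_mul hq hm
    nlinarith
  rcases hpar.exists_isLeafFamily_or_isBarePath (fun y hy hyv => hpar.children_nonempty hy hyv <|
      hleaf y ((hpar.adj_iff v y).2 (Or.inl ⟨hy, hyv⟩))) hchildren (by omega) hcard with
    ⟨X, l, hX, hl⟩ | ⟨c, hc⟩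
  · exact hl.wins hpar hX hUV hD hdegree (by omega) (by omega) (by omega)
  · exact hc.wins hUV hD hdegree (by omega) (by omega)

theorem WC_tree_embedding_rooted_general {V : Type*} [Fintype V] [DecidableEq V]
    {n : ℕ} (hV : Fintype.card V = n) (hn : 2 ^ 60 ≤ n) {T : SimpleGraph V} (hT : T.IsTree) {v : V}
    (hleaf : ∀ u, T.Adj v u → (T.neighborSet u).ncard ≠ 1)
    (hroot : 2 * (T.neighborSet v).ncard + 2 * Nat.log 2 n + 4 ≤ n)
    (hdeg : ∀ u, u ≠ v →
      ((T.neighborSet u \ {v}).ncard : ℝ) ≤ 1 / 200 * Real.sqrt n) (p : V) :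
    WaiterWinsOffers (univ.filter fun e : Sym2 V => ¬ e.IsDiag) 1
      (fun O => #{e ∈ O | p ∈ e} = 0 ∨ #{e ∈ O | p ∈ e} = 2)
      (fun C _ => ∃ σ : Equiv.Perm V, σ v = p ∧ ∀ e ∈ T.edgeSet, Sym2.map σ e ∈ C)
      n ∅ ∅ := by
  classical
  subst hV
  have hncard : ∀ u, (T.neighborSet u).ncard = T.degree u := fun u => by
    rw [Set.ncard_eq_toFinset_card', ← T.card_neighborFinset_eq_degree, SimpleGraph.neighborFinset]
  simp only [hncard] at hleaf hroot
  have hdeg_sqrt : ∀ u, u ≠ v →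
      200 * #((T.neighborFinset u).erase v) ≤ Nat.sqrt (Fintype.card V) := by
    intro u hu
    have h := hdeg u hu
    rw [← T.coe_neighborFinset, ← coe_erase, Set.ncard_coe_finset] at h
    rw [← Real.nat_floor_real_sqrt_eq_nat_sqrt]
    refine Nat.le_floor ?_
    push_cast
    linarith
  refine WaiterWinsOffers.mono ?_ (Wins.of_isTree hT rfl
    (Nat.lt_pow_succ_log_self one_lt_two _) (Nat.sqrt_le' _) (log_sq_le_sqrt hn) hleaf hroot
    hdeg_sqrt p)
  rintro C - ⟨σ, hσ, hσv, hedge⟩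
  refine ⟨.ofBijective σ (Finite.injective_iff_bijective.1 hσ), hσv, fun e => ?_⟩
  induction e with | h x y => exact hedge x y

theorem two_mul_add_log_le {n k : ℕ} (hn : 2 ^ 60 ≤ n) (hk : (k : ℝ) ≤ n / 3) :
    2 * k + 2 * Nat.log 2 n + 4 ≤ n := by
  have hsqrt := (log_sq_le_sqrt hn).trans (Nat.sqrt_le_self n)
  have hk' : (k : ℝ) * 3 ≤ n := (le_div_iff₀ three_pos).1 hk
  norm_cast at hk'
  nlinarith

end Main

/-- There is a constant `ε > 0` such that for every large enough `n` the following holds.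
Let `T` be a tree on `n` vertices and let `v` be a vertex of `T` which is neither a leaf nor a
neighbour of a leaf, with `d_T(v) ≤ n/3`, such that deleting `v` from `T` leaves a graph of
maximum degree at most `ε·√n`.  Then for any vertex `p` of `K_n`, in the unbiased Waiter-Client
game on `E(K_n)`, Waiter can force Client to claim a copy of `T` within `n` rounds in such a way
that (a) the vertex `p` represents `v` in Client's copy of `T`, and (b) in each round Waiter
offers either exactly two edges incident to `p` or no edge incident to `p`. -/
theorem WC_tree_embedding_rooted :
    ∃ ε : ℝ, 0 < ε ∧ ∃ n₀ : ℕ, ∀ n : ℕ, n₀ ≤ n →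
      ∀ T : SimpleGraph (Fin n), T.IsTree →
      ∀ v : Fin n,
        -- `v` is not a leaf of `T`
        (T.neighborSet v).ncard ≠ 1 →
        -- `v` is not adjacent to a leaf of `T`
        (∀ u : Fin n, T.Adj v u → (T.neighborSet u).ncard ≠ 1) →
        -- `d_T(v) ≤ n/3`
        ((T.neighborSet v).ncard : ℝ) ≤ (n : ℝ) / 3 →
        -- the tree obtained from `T` by deleting `v` has maximum degree at most `ε·√n`
        (∀ u : Fin n, u ≠ v → (((T.neighborSet u) \ {v}).ncard : ℝ) ≤ ε * Real.sqrt n) →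
      ∀ p : Fin n,
        WaiterWinsOffers (Kedges n) 1
          -- (b): each offer contains exactly two or no edges incident to `p`
          (fun O => (O.filter (fun e => p ∈ e)).card = 0 ∨
                    (O.filter (fun e => p ∈ e)).card = 2)
          -- (a): Client's graph contains a copy of `T` in which `p` represents `v`
          (fun Cl _ => ∃ σ : Equiv.Perm (Fin n), σ v = p ∧
            ∀ e ∈ T.edgeSet, Sym2.map σ e ∈ Cl)
          n ∅ ∅ := by
  refine ⟨1 / 200, by norm_num, 2 ^ 60, fun n hn T hT v _ hleaf hroot hdeg p => ?_⟩
  exact WC_tree_embedding_rooted_general (Fintype.card_fin n) hn hT hleaf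
    (two_mul_add_log_le hn hroot) hdeg p
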